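/- Every element of G of finite order n > 1 is conjugate in G to one of the following elements, or to the inverse of one of them: v², j⁶, (bu⁻¹)², u, j⁴, uj⁴, buv, v, j³, vj³, v²j³, bu⁻¹, j², v²j², v²uj, v²uj⁵, bv²u⁻¹j, bv², uvj, bj, (bj)³, j, j⁵, uv⁻¹j², uv⁻¹j³, uv⁻¹j⁶, uv⁻¹j⁻¹, v²j, uv², uj, uj³, bv, (bv)⁻⁵, uv, vuj². -/

import Mathlib

/-- Generators of the Cartwright–Steger lattice presentation. -/
inductive CSgen : Type
  | u : CSgen
  | v : CSgen
  | b : CSgen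

open FreeGroup in
/-- Relators of the Cartwright–Steger lattice:
`u³ = v⁴ = b³ = 1`, `(uv)² = (vu)²`, `vb = bv`, `(buv)³ = 1`, `(buvu)²v = 1`. -/
def csRels : Set (FreeGroup CSgen) :=
  { (of CSgen.u) ^ 3,
    (of CSgen.v) ^ 4,
    (of CSgen.b) ^ 3,
    (of CSgen.u * of CSgen.v) ^ 2 * ((of CSgen.v * of CSgen.u) ^ 2)⁻¹,
    of CSgen.v * of CSgen.b * (of CSgen.b * of CSgen.v)⁻¹,
    (of CSgen.b * of CSgen.u * of CSgen.v) ^ 3,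
    (of CSgen.b * of CSgen.u * of CSgen.v * of CSgen.u) ^ 2 * of CSgen.v }

/-- The Cartwright–Steger lattice, as an abstract presented group. -/
abbrev CS : Type := PresentedGroup csRels

def gu : CS := PresentedGroup.of CSgen.u
def gv : CS := PresentedGroup.of CSgen.v
def gb : CS := PresentedGroup.of CSgen.b
/-- `j = (uv)²`. -/
def gj : CS := (gu * gv) ^ 2

/-- Representatives of the conjugacy classes of nontrivial torsion elements
(up to inverses): `v²`, `j⁶`, `(bu⁻¹)²`, `u`, `j⁴`, `uj⁴`, `buv`, `v`, `j³`, `vj³`,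
`v²j³`, `bu⁻¹`, `j²`, `v²j²`, `v²uj`, `v²uj⁵`, `bv²u⁻¹j`, `bv²`, `uvj`, `bj`, `(bj)³`,
`j`, `j⁵`, `uv⁻¹j²`, `uv⁻¹j³`, `uv⁻¹j⁶`, `uv⁻¹j⁻¹`, `v²j`, `uv²`, `uj`, `uj³`,
`bv`, `(bv)⁻⁵`, `uv`, `vuj²`. -/
def torsionReps : List CS :=
  [ gv ^ 2, gj ^ 6, (gb * gu⁻¹) ^ 2,
    gu, gj ^ 4, gu * gj ^ 4, gb * gu * gv,
    gv, gj ^ 3, gv * gj ^ 3, gv ^ 2 * gj ^ 3, gb * gu⁻¹,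
    gj ^ 2, gv ^ 2 * gj ^ 2, gv ^ 2 * gu * gj, gv ^ 2 * gu * gj ^ 5,
    gb * gv ^ 2 * gu⁻¹ * gj, gb * gv ^ 2,
    gu * gv * gj, gb * gj, (gb * gj) ^ 3,
    gj, gj ^ 5, gu * gv⁻¹ * gj ^ 2, gu * gv⁻¹ * gj ^ 3, gu * gv⁻¹ * gj ^ 6,
    gu * gv⁻¹ * gj⁻¹, gv ^ 2 * gj, gu * gv ^ 2, gu * gj, gu * gj ^ 3,
    gb * gv, (gb * gv) ^ (-5 : ℤ),
    gu * gv, gv * gu * gj ^ 2 ]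

/-!
The group acts on the complex hyperbolic plane, modelled on the unit ball of `ℂ²`, through matrices
over `ℤ[ζ₁₂]` that preserve a Hermitian form of signature `(2, 1)`. Let `K = ⟨u, v⟩`, a group of
order `288` that fixes the centre, and let `σ` run through `1, b, bu⁻¹b`. Two facts about words
`x σ y` with `x, y ∈ K` are found by computation: a point of the ball of a certain radius around the
centre lies in a smaller ball around the image of the centre under such a word, and a product of two
such words that moves the centre only a little is equal to such a word in the abstract group.

Hence the balls of that radius, one for each element of the free group, can be glued along the
relation that the quotient of the indices is equal to a word `x σ y` in `G`, and the result is a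
covering of the simply connected plane. It has a section, so whenever two balls meet the quotient of
their indices is such a word in `G`. An element of finite order fixes a point of the plane, which
lies in one of the balls, and the element is therefore conjugate to some `x σ y`, hence to one of
the `864` elements `σ y`. Among these, Goldman's discriminant of the trace excludes elements of
infinite order, and explicit conjugations bring the others into the list.
-/

namespace CartwrightSteger

/-! ### Gluing an open cover of a simply connected space -/

section Gluing

open Set Topology

/-- A family of open subsets `sheet i` of `X` with a relation on the index set along which they can
be glued: over a common point of the sheets the relation is transitive. The smaller sets `core i`
make the glued space evenly covered over `X`. -/
structure GluingData (X I : Type*) [TopologicalSpace X] where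
  sheet : I → Set X
  core : I → Set X
  rel : I → I → Prop
  rel_refl : ∀ i, rel i i
  rel_symm : ∀ {i k}, rel i k → rel k i
  rel_trans : ∀ {i k l x}, x ∈ sheet i → x ∈ sheet k → x ∈ sheet l →
    rel i k → rel k l → rel i l
  isOpen_sheet : ∀ i, IsOpen (sheet i)
  core_subset_sheet : ∀ i, core i ⊆ sheet i
  exists_rel_mem_core : ∀ {i x}, x ∈ sheet i → ∃ k, rel i k ∧ x ∈ core k
  exists_isOpen : ∀ x, ∃ W, IsOpen W ∧ x ∈ W ∧
    ∀ i, (x ∈ core i → W ⊆ sheet i) ∧ ∀ y ∈ W, y ∈ core i → x ∈ sheet i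

namespace GluingData

variable {X I : Type*} [TopologicalSpace X] (D : GluingData X I)

/-- Points of two sheets are glued when they are the same point of `X` and the sheets are
related. -/
def setoid : Setoid (Σ i, D.sheet i) where
  r p q := (p.2 : X) = q.2 ∧ D.rel p.1 q.1
  iseqv :=
    { refl := fun _ => ⟨rfl, D.rel_refl _⟩
      symm := fun h => ⟨h.1.symm, D.rel_symm h.2⟩
      trans := fun {p q r} h h' => ⟨h.1.trans h'.1,
        D.rel_trans p.2.2 (h.1 ▸ q.2.2) (h.1.trans h'.1 ▸ r.2.2) h.2 h'.2⟩ }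

/-- The space obtained by gluing the sheets. -/
abbrev Glued : Type _ := Quotient D.setoid

/-- The projection of the glued space to `X`. -/
def proj : D.Glued → X := Quotient.lift (fun p => (p.2 : X)) fun _ _ h => h.1

/-- The inclusion of a sheet in the glued space. -/
def incl (i : I) (z : D.sheet i) : D.Glued := Quotient.mk D.setoid ⟨i, z⟩

variable {D}

@[simp]
theorem proj_incl (i : I) (z : D.sheet i) : D.proj (D.incl i z) = z := rfl

theorem incl_eq_incl {i k : I} {z : D.sheet i} {z' : D.sheet k} :
    D.incl i z = D.incl k z' ↔ (z : X) = z' ∧ D.rel i k :=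
  Quotient.eq (r := D.setoid)

theorem exists_incl_eq (y : D.Glued) : ∃ i z, D.incl i z = y := by
  induction y using Quotient.inductionOn with
  | h p => exact ⟨p.1, p.2, rfl⟩

theorem continuous_incl (i : I) : Continuous (D.incl i) :=
  continuous_quotient_mk'.comp continuous_sigmaMk

theorem continuous_proj : Continuous D.proj :=
  continuous_quot_lift _ (continuous_sigma fun _ => continuous_subtype_val)

theorem isOpen_iff {T : Set D.Glued} : IsOpen T ↔ ∀ k, IsOpen (D.incl k ⁻¹' T) :=
  isOpen_coinduced.trans isOpen_sigma_iff

theorem isOpenMap_incl (i : I) : IsOpenMap (D.incl i) := by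
  intro V hV
  refine isOpen_iff.2 fun k => ?_
  by_cases hR : D.rel i k
  · obtain ⟨V', hV', rfl⟩ := isOpen_induced_iff.1 hV
    convert! ((D.isOpen_sheet i).inter hV').preimage (continuous_subtype_val (p := (· ∈ D.sheet k)))
    ext z
    constructor
    · rintro ⟨z', h, h'⟩
      have hz := (incl_eq_incl.1 h').1
      exact ⟨hz ▸ z'.2, hz ▸ h⟩
    · rintro ⟨h, h'⟩
      exact ⟨⟨z, h⟩, h', incl_eq_incl.2 ⟨rfl, hR⟩⟩
  · convert! isOpen_empty
    refine eq_empty_of_forall_notMem ?_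
    rintro z ⟨z', -, h⟩
    exact hR (incl_eq_incl.1 h).2

theorem exists_core_of_proj_eq {x : X} (y : D.Glued) (hy : D.proj y = x) :
    ∃ i, x ∈ D.core i ∧ ∀ h : x ∈ D.sheet i, D.incl i ⟨x, h⟩ = y := by
  obtain ⟨k, z, rfl⟩ := exists_incl_eq y
  obtain rfl : (z : X) = x := hy
  obtain ⟨i, hR, hi⟩ := D.exists_rel_mem_core z.2
  exact ⟨i, hi, fun _ => incl_eq_incl.2 ⟨rfl, D.rel_symm hR⟩⟩

/-- The part over `W` of the sheet `i` in the glued space. -/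
def slice (W : Set X) (i : I) : Set D.Glued := D.incl i '' (Subtype.val ⁻¹' W)

theorem injOn_proj_slice (W : Set X) (i : I) : (slice (D := D) W i).InjOn D.proj := by
  rintro _ ⟨z, -, rfl⟩ _ ⟨z', -, rfl⟩ h
  exact congrArg _ (Subtype.ext h)

theorem surjOn_proj_slice {W : Set X} {i : I} (hW : W ⊆ D.sheet i) :
    (slice W i).SurjOn D.proj W :=
  fun z hz => ⟨D.incl i ⟨z, hW hz⟩, ⟨_, hz, rfl⟩, rfl⟩

theorem isOpen_iff_isOpen_inter_slice {W W' : Set X} {i : I} (hW : IsOpen W)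
    (hi : W ⊆ D.sheet i) (hW' : W' ⊆ W) :
    IsOpen W' ↔ IsOpen (D.proj ⁻¹' W' ∩ slice W i) := by
  refine ⟨fun h => (h.preimage continuous_proj).inter
    (isOpenMap_incl i _ (hW.preimage continuous_subtype_val)), fun h => ?_⟩
  convert! (D.isOpen_sheet i).isOpenMap_subtype_val _ (h.preimage (continuous_incl i))
  ext z
  constructor
  · exact fun hz => ⟨⟨z, hi (hW' hz)⟩, ⟨hz, _, hW' hz, rfl⟩, rfl⟩
  · rintro ⟨z, ⟨hz, -⟩, rfl⟩
    exact hz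

theorem disjoint_slice {W : Set X} {i k : I} (h : ¬ D.rel i k) :
    Disjoint (slice (D := D) W i) (slice W k) := by
  refine disjoint_left.2 ?_
  rintro _ ⟨z, -, rfl⟩ ⟨z', -, h'⟩
  exact h (D.rel_symm (incl_eq_incl.1 h').2)

/-- Near `x` the slices of the sheets whose core contains `x`, one chosen for every point of the
fibre, form an even covering. -/
theorem isCoveringMap_proj : IsCoveringMap D.proj := by
  intro x
  obtain ⟨W, hW, hxW, hWD⟩ := D.exists_isOpen x
  choose rep rep_core incl_rep using fun y : D.proj ⁻¹' {x} => exists_core_of_proj_eq y.1 y.2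
  have rep_sheet y : x ∈ D.sheet (rep y) := D.core_subset_sheet _ (rep_core y)
  have sub_sheet y : W ⊆ D.sheet (rep y) := (hWD _).1 (rep_core y)
  have eq_of_rel y y' (hR : D.rel (rep y) (rep y')) : y = y' := Subtype.ext <| by
    rw [← incl_rep y (rep_sheet y), ← incl_rep y' (rep_sheet y')]
    exact incl_eq_incl.2 ⟨rfl, hR⟩
  have exhaustive : D.proj ⁻¹' W ⊆ ⋃ y, slice W (rep y) := by
    intro y hy
    obtain ⟨k, z, rfl⟩ := exists_incl_eq y
    obtain ⟨i, hR, hi⟩ := D.exists_rel_mem_core z.2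
    have hxi : x ∈ D.sheet i := (hWD i).2 z hy hi
    let y : D.proj ⁻¹' {x} := ⟨D.incl i ⟨x, hxi⟩, rfl⟩
    have hR' : D.rel (rep y) i := (incl_eq_incl.1 (incl_rep y (rep_sheet y))).2
    exact mem_iUnion.2 ⟨y, ⟨z, sub_sheet y hy⟩, hy, incl_eq_incl.2 ⟨rfl,
      D.rel_trans (sub_sheet y hy) (D.core_subset_sheet i hi) z.2 hR' (D.rel_symm hR)⟩⟩
  let : TopologicalSpace (D.proj ⁻¹' {x}) := ⊥
  have : DiscreteTopology (D.proj ⁻¹' {x}) := ⟨rfl⟩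
  rcases isEmpty_or_nonempty (D.proj ⁻¹' {x}) with hx | ⟨⟨y₀⟩⟩
  · refine (IsEvenlyCovered.of_preimage_eq_empty (I := D.proj ⁻¹' {x}) (hW.mem_nhds hxW)
      (eq_empty_of_forall_notMem fun y hy => ?_)).to_isEvenlyCovered_preimage
    exact isEmptyElim (mem_iUnion.1 (exhaustive hy)).choose
  · have : Nonempty D.Glued := ⟨y₀⟩
    have : Nonempty (D.proj ⁻¹' {x}) := ⟨y₀⟩
    let t := IsOpen.trivializationDiscrete (fun y => slice W (rep y)) W hW
      (fun y => isOpen_iff_isOpen_inter_slice hW (sub_sheet y)) (fun _ => injOn_proj_slice _ _)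
      (fun y => surjOn_proj_slice (sub_sheet y))
      (fun y y' hne => disjoint_slice fun hR => hne (eq_of_rel y y' hR)) exhaustive
    exact (IsEvenlyCovered.of_trivialization (t := t) hxW).to_isEvenlyCovered_preimage

/-- A section of the projection that agrees with a connected sheet at one point agrees with the
whole sheet. -/
theorem section_eq_incl_of_eq {s : X → D.Glued} (hs : Continuous s) (hsec : ∀ x, D.proj (s x) = x)
    {i : I} (hi : IsPreconnected (D.sheet i)) {z : D.sheet i} (hz : s z = D.incl i z)
    (z' : D.sheet i) : s z' = D.incl i z' := by
  have : PreconnectedSpace (D.sheet i) := Subtype.preconnectedSpace hi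
  exact congrFun (isCoveringMap_proj.eq_of_comp_eq (g₁ := fun z : D.sheet i => s z)
    (hs.comp continuous_subtype_val) (continuous_incl i) (funext fun z => hsec z) z hz) z'

/-- As `X` is simply connected, the projection has a section; it agrees with all sheets. -/
theorem exists_section [SimplyConnectedSpace X] [LocallyPathConnectedSpace X]
    (hD : ∀ i, IsPreconnected (D.sheet i))
    (hconn : ∀ i k, Relation.ReflTransGen
      (fun i k => D.rel i k ∧ (D.sheet i ∩ D.sheet k).Nonempty) i k)
    {i₀ : I} (h₀ : (D.sheet i₀).Nonempty) :
    ∃ s : X → D.Glued, (∀ x, D.proj (s x) = x) ∧ ∀ i, ∀ z : D.sheet i, s z = D.incl i z := by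
  obtain ⟨x₀, h₀⟩ := h₀
  obtain ⟨s, ⟨hs₀, hs⟩, -⟩ := isCoveringMap_proj.existsUnique_continuousMap_lifts
    (ContinuousMap.id X) x₀ (D.incl i₀ ⟨x₀, h₀⟩) rfl
  have hsec : ∀ x, D.proj (s x) = x := congrFun hs
  refine ⟨s, hsec, fun i => ?_⟩
  induction hconn i₀ i with
  | refl => exact section_eq_incl_of_eq s.continuous hsec (hD i₀) (z := ⟨x₀, h₀⟩) hs₀
  | @tail k i _ hstep ih =>
    obtain ⟨hR, z, hk, hi⟩ := hstep
    exact section_eq_incl_of_eq s.continuous hsec (hD i) (z := ⟨z, hi⟩)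
      ((ih ⟨z, hk⟩).trans (incl_eq_incl.2 ⟨rfl, hR⟩))

theorem exists_mem_sheet_and_rel [SimplyConnectedSpace X] [LocallyPathConnectedSpace X]
    (hD : ∀ i, IsPreconnected (D.sheet i))
    (hconn : ∀ i k, Relation.ReflTransGen
      (fun i k => D.rel i k ∧ (D.sheet i ∩ D.sheet k).Nonempty) i k)
    {i₀ : I} (h₀ : (D.sheet i₀).Nonempty) :
    (∀ x, ∃ i, x ∈ D.sheet i) ∧ ∀ i k x, x ∈ D.sheet i → x ∈ D.sheet k → D.rel i k := by
  obtain ⟨s, hsec, hs⟩ := exists_section hD hconn h₀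
  refine ⟨fun x => ?_, fun i k x hi hk => ?_⟩
  · obtain ⟨i, z, hz⟩ := exists_incl_eq (s x)
    exact ⟨i, (by rw [← hsec x, ← hz, proj_incl] : x = z) ▸ z.2⟩
  · exact (incl_eq_incl.1 ((hs i ⟨x, hi⟩).symm.trans (hs k ⟨x, hk⟩))).2

end GluingData

end Gluing

/-! ### Consequences of the defining relations -/

theorem mk_eq_one {r : FreeGroup CSgen} (hr : r ∈ csRels) : PresentedGroup.mk csRels r = 1 :=
  PresentedGroup.one_of_mem hr

theorem gu_pow_three : gu ^ 3 = 1 := mk_eq_one (by simp [csRels])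

theorem gv_pow_four : gv ^ 4 = 1 := mk_eq_one (by simp [csRels])

theorem gb_pow_three : gb ^ 3 = 1 := mk_eq_one (by simp [csRels])

theorem gj_eq : gj = (gv * gu) ^ 2 := mul_inv_eq_one.1 (mk_eq_one (by simp [csRels]))

theorem commute_gv_gb : Commute gv gb := mul_inv_eq_one.1 (mk_eq_one (by simp [csRels]))

theorem gb_gu_gv_pow_three : (gb * gu * gv) ^ 3 = 1 := mk_eq_one (by simp [csRels])

theorem gb_gu_gv_gu_sq_mul_gv : (gb * gu * gv * gu) ^ 2 * gv = 1 := mk_eq_one (by simp [csRels])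

theorem gu_mul_gu : gu * gu = gu⁻¹ := by
  rw [eq_inv_iff_mul_eq_one, ← gu_pow_three, pow_succ, pow_two]

theorem gb_mul_gb : gb * gb = gb⁻¹ := by
  rw [eq_inv_iff_mul_eq_one, ← gb_pow_three, pow_succ, pow_two]

theorem gv_pow_three : gv ^ 3 = gv⁻¹ := by
  rw [eq_inv_iff_mul_eq_one, ← pow_succ, gv_pow_four]

theorem gu_gv_gu : gu * gv * gu = gj * gv⁻¹ := by
  rw [gj, pow_two]; group

theorem gv_gu_gv : gv * gu * gv = gj * gu⁻¹ := by
  rw [gj_eq, pow_two]; group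

theorem commute_gj_gu : Commute gj gu := by
  have : gj * gu = gu * (gv * gu) ^ 2 := by simp only [gj, pow_two, mul_assoc]
  rw [Commute, SemiconjBy, this, gj_eq]

theorem commute_gj_gv : Commute gj gv := by
  have : (gv * gu) ^ 2 * gv = gv * gj := by simp only [gj, pow_two, mul_assoc]
  rw [Commute, SemiconjBy, ← this, gj_eq]

theorem gu_gv_gu_inv : gu * gv * gu⁻¹ = gj * gv⁻¹ * gu := by
  rw [← gu_mul_gu, ← mul_assoc, gu_gv_gu]

theorem gv_inv_gu_inv_gv_inv : gv⁻¹ * gu⁻¹ * gv⁻¹ = gu * gj⁻¹ := by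
  rw [← inv_inj, mul_inv_rev gu, inv_inv, ← gv_gu_gv]; group

theorem gu_gv_sq_gu : gu * gv ^ 2 * gu = gj ^ 2 * (gv⁻¹ * gu * gv⁻¹) :=
  calc gu * gv ^ 2 * gu = gu * gv * (gv * gu * gv) * gv⁻¹ := by rw [pow_two]; group
    _ = (gu * gv * gj) * gu⁻¹ * gv⁻¹ := by rw [gv_gu_gv]; group
    _ = gj * (gu * gv * gu⁻¹) * gv⁻¹ := by
      rw [← (commute_gj_gu.mul_right commute_gj_gv).eq]; group
    _ = _ := by rw [gu_gv_gu_inv, pow_two]; group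

theorem gv_mul_gu_gv_inv_gu : gv * (gu * gv⁻¹ * gu) = gj ^ 3 * (gu * gv⁻¹ * gu) * gv⁻¹ := by
  calc gv * (gu * gv⁻¹ * gu) = (gv * gu * gv) * (gv ^ 4)⁻¹ * gv ^ 2 * gu := by group
    _ = gj * gu⁻¹ * gv ^ 2 * gu := by rw [gv_gu_gv, gv_pow_four, inv_one, mul_one]
    _ = gj * gu * (gu * gv ^ 2 * gu) := by rw [← gu_mul_gu]; group
    _ = gj * (gu * gj ^ 2) * (gv⁻¹ * gu * gv⁻¹) := by rw [gu_gv_sq_gu]; group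
    _ = _ := by rw [← (commute_gj_gu.pow_left 2).eq]; group

theorem gj_pow_twelve : gj ^ 12 = 1 := by
  have h : (gu * gv⁻¹ * gu) * gv * (gu * gv⁻¹ * gu)⁻¹ = gv⁻¹ * gj ^ 3 :=
    calc _ = gv⁻¹ * (gv * (gu * gv⁻¹ * gu)) * gv * (gu * gv⁻¹ * gu)⁻¹ := by group
      _ = _ := by rw [gv_mul_gu_gv_inv_gu]; group
  have h4 := conj_pow (i := 4) (a := gu * gv⁻¹ * gu) (b := gv)
  rw [h, (commute_gj_gv.pow_left 3).inv_right.symm.mul_pow, ← pow_mul, inv_pow, gv_pow_four] at h4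
  simpa using h4

theorem gj_pow_eleven : gj ^ 11 = gj⁻¹ := by
  rw [eq_inv_iff_mul_eq_one, ← pow_succ, gj_pow_twelve]

theorem gb_gj_gb : gb * gj * gb = gv * gj⁻¹ := by
  have h : gb * gu * gv * gu = gb * gj * gv⁻¹ := by
    rw [mul_assoc gb, mul_assoc gb, gu_gv_gu, mul_assoc]
  have h2 : gb * gj * gb * (gv⁻¹ * gj) = 1 := by
    calc gb * gj * gb * (gv⁻¹ * gj) = gb * gj * (gb * gv⁻¹) * (gj * gv⁻¹) * gv := by group
      _ = (gb * gj * gv⁻¹) ^ 2 * gv := by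
        rw [← commute_gv_gb.inv_left.eq, pow_two]; group
      _ = 1 := by rw [← h, gb_gu_gv_gu_sq_mul_gv]
  rw [eq_inv_of_mul_eq_one_left h2, mul_inv_rev, inv_inv, commute_gj_gv.inv_left.eq]

theorem gj_mul_gb : gj * gb = gb⁻¹ * gv * gj⁻¹ := by
  rw [mul_assoc, ← gb_gj_gb]; group

theorem gb_mul_gj : gb * gj = gv * gj⁻¹ * gb⁻¹ := by
  rw [← gb_gj_gb]; group

theorem gb_mul_gb_eq : gb * gb = gj * gb * gv⁻¹ * gj := by
  rw [gb_mul_gb, gj_mul_gb, mul_assoc _ gv, ← commute_gj_gv.inv_left.eq]; group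

theorem gb_gu_gb : gb * gu * gb = gu * gb * gu := by
  have h : gb * (gu * gv) * gb = (gu * gv)⁻¹ * gb⁻¹ * (gu * gv)⁻¹ := by
    have h3 : gb * (gu * gv) * gb * ((gu * gv) * gb * (gu * gv)) = 1 := by
      rw [← gb_gu_gv_pow_three, pow_succ, pow_two]; group
    rw [eq_inv_of_mul_eq_one_left h3]; group
  have hb : gb⁻¹ = gu * gv * gu * (gb * gj) := by
    rw [gb_mul_gj, gj, pow_two]; group
  calc gb * gu * gb = gb * gu * (gb * gv) * gv⁻¹ := by group
    _ = gb * (gu * gv) * gb * gv⁻¹ := by rw [← commute_gv_gb.eq]; group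
    _ = (gu * gv)⁻¹ * gb⁻¹ * (gu * gv)⁻¹ * gv⁻¹ := by rw [h]
    _ = gu * gb * gu := by rw [hb, gj, pow_two]; group

theorem gb_gu_gb_inv : gb * gu * gb⁻¹ = gu⁻¹ * gb * gu :=
  calc gb * gu * gb⁻¹ = gu⁻¹ * (gu * gb * gu) * gb⁻¹ := by group
    _ = _ := by rw [← gb_gu_gb]; group

theorem gb_inv_gu_gb : gb⁻¹ * gu * gb = gu * gb * gu⁻¹ :=
  calc gb⁻¹ * gu * gb = gb⁻¹ * (gu * gb * gu) * gu⁻¹ := by group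
    _ = _ := by rw [← gb_gu_gb]; group

theorem gb_gj_sq_gb : gb * gj ^ 2 * gb = gv * gj⁻¹ * gb * (gv * gj⁻¹) :=
  calc gb * gj ^ 2 * gb = (gb * gj) * (gj * gb) := by rw [pow_two]; group
    _ = gv * gj⁻¹ * (gb * gb)⁻¹ * (gv * gj⁻¹) := by rw [gb_mul_gj, gj_mul_gb]; group
    _ = _ := by rw [gb_mul_gb, inv_inv]

theorem gb_gu_gj_inv_gb :
    gb * (gu * gj⁻¹) * gb = gv⁻¹ * (gb * gu⁻¹ * gb) * gv⁻¹ :=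
  calc gb * (gu * gj⁻¹) * gb = (gb * gv⁻¹) * gu⁻¹ * (gv⁻¹ * gb) := by
        rw [← gv_inv_gu_inv_gv_inv]; group
    _ = _ := by
      rw [← commute_gv_gb.inv_left.eq]
      nth_rw 2 [commute_gv_gb.inv_left.eq]
      group

theorem gb_gu_gj_gb : gb * (gu * gj) * gb = gu⁻¹ * gb * (gu * gv * gj⁻¹) :=
  calc gb * (gu * gj) * gb = gb * gu * (gj * gb) := by group
    _ = (gb * gu * gb⁻¹) * (gv * gj⁻¹) := by rw [gj_mul_gb]; group
    _ = _ := by rw [gb_gu_gb_inv]; group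

theorem gu_mul_gb_gu_inv_gb : gu * (gb * gu⁻¹ * gb) = gb⁻¹ * gu * gb⁻¹ := by
  have h : gb * gu⁻¹ * gb⁻¹ = gu⁻¹ * gb⁻¹ * gu := by
    simpa [mul_assoc] using congrArg (·⁻¹) gb_gu_gb_inv
  calc gu * (gb * gu⁻¹ * gb) = gu * (gb * gu⁻¹ * gb⁻¹) * (gb * gb) := by group
    _ = _ := by rw [h, gb_mul_gb]; group

theorem gb_gu_inv_gb_mul_gu : gb * gu⁻¹ * gb * gu = gb⁻¹ * gu * gb⁻¹ := by
  have h : gb⁻¹ * gu⁻¹ * gb = gu * gb⁻¹ * gu⁻¹ := by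
    simpa [mul_assoc] using congrArg (·⁻¹) gb_inv_gu_gb
  calc gb * gu⁻¹ * gb * gu = gb * gb * (gb⁻¹ * gu⁻¹ * gb) * gu := by group
    _ = _ := by rw [h, gb_mul_gb]; group

theorem commute_gu_gb_gu_inv_gb : Commute gu (gb * gu⁻¹ * gb) :=
  gu_mul_gb_gu_inv_gb.trans gb_gu_inv_gb_mul_gu.symm

theorem gb_gu_gj_sq_gb :
    gb * (gu * gj ^ 2) * gb = gv * gj⁻¹ * gu * (gb * gu⁻¹ * gb) * (gv * gj⁻¹) :=
  calc gb * (gu * gj ^ 2) * gb = gb * (gu * gj) * (gj * gb) := by rw [pow_two]; group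
    _ = (gb * gj) * gu * (gj * gb) := by rw [← commute_gj_gu.eq]; group
    _ = gv * gj⁻¹ * (gb⁻¹ * gu * gb⁻¹) * (gv * gj⁻¹) := by rw [gb_mul_gj, gj_mul_gb]; group
    _ = _ := by rw [← gu_mul_gb_gu_inv_gb]; group

theorem gv_inv_gu_inv : gv⁻¹ * gu⁻¹ = gu * gv * gj⁻¹ := by
  rw [eq_mul_inv_iff_mul_eq, mul_assoc, ← commute_gj_gu.inv_right.eq, ← mul_assoc,
    ← commute_gj_gv.inv_right.eq, ← gu_gv_gu]
  group

theorem gb_mul_gb_gu_inv_gb : gb * (gb * gu⁻¹ * gb) = gu * gj * gb * (gu * gv) :=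
  calc gb * (gb * gu⁻¹ * gb) = gb * gb * gu⁻¹ * gb := by group
    _ = (gb⁻¹ * gu * gb)⁻¹ := by rw [gb_mul_gb]; group
    _ = gu * (gb * gb) * gu⁻¹ := by rw [gb_inv_gu_gb, gb_mul_gb]; group
    _ = gu * gj * gb * gv⁻¹ * (gj * gu⁻¹) := by rw [gb_mul_gb_eq]; group
    _ = gu * gj * gb * (gv⁻¹ * gu⁻¹ * gj) := by rw [commute_gj_gu.inv_right.eq]; group
    _ = _ := by rw [gv_inv_gu_inv, inv_mul_cancel_right]

theorem gb_gj_gb_gu_inv_gb : gb * gj * (gb * gu⁻¹ * gb) = gv * gj⁻¹ * gu⁻¹ * gb := by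
  rw [gb_mul_gj]; group

theorem gb_gu_gv_gb_gu_inv_gb :
    gb * (gu * gv) * (gb * gu⁻¹ * gb) = gj⁻¹ * gu⁻¹ * gb * gu⁻¹ :=
  calc gb * (gu * gv) * (gb * gu⁻¹ * gb) = gb * gu * (gv * gb) * gu⁻¹ * gb := by group
    _ = (gb * gu * gb) * gv * gu⁻¹ * gb := by rw [commute_gv_gb.eq]; group
    _ = gu * gb * (gu * gv * gu⁻¹) * gb := by rw [gb_gu_gb]; group
    _ = gu * (gb * gj) * gv⁻¹ * gu * gb := by rw [gu_gv_gu_inv]; group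
    _ = gu * (gv * gj⁻¹) * (gb⁻¹ * gv⁻¹) * gu * gb := by rw [gb_mul_gj]; group
    _ = gu * (gj⁻¹ * gv) * (gv⁻¹ * gb⁻¹) * gu * gb := by
      rw [← commute_gv_gb.inv_inv.eq, ← commute_gj_gv.inv_left.eq]
    _ = gu * gj⁻¹ * (gb⁻¹ * gu * gb) := by group
    _ = gj⁻¹ * (gu * gu) * gb * gu⁻¹ := by
      rw [gb_inv_gu_gb, ← commute_gj_gu.inv_left.eq]; group
    _ = _ := by rw [gu_mul_gu]

theorem gb_gu_gb_gu_inv_gb : gb * gu * (gb * gu⁻¹ * gb) = gu * gj * gb * (gv⁻¹ * gj) := by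
  have h : gu * gv * gu = gv⁻¹ * gj := by rw [gu_gv_gu, commute_gj_gv.inv_right.eq]
  rw [mul_assoc gb gu, commute_gu_gb_gu_inv_gb.eq, ← mul_assoc, gb_mul_gb_gu_inv_gb, ← h]
  group

theorem gb_gu_gj_gb_gu_inv_gb :
    gb * (gu * gj) * (gb * gu⁻¹ * gb) = gv * gj⁻¹ * gu⁻¹ * gb * gu := by
  rw [← gb_gj_gb_gu_inv_gb, mul_assoc _ _ gu, ← commute_gu_gb_gu_inv_gb.eq, ← commute_gj_gu.eq]
  group

theorem gb_gu_gv_gj_inv_gb_gu_inv_gb :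
    gb * (gu * gv * gj⁻¹) * (gb * gu⁻¹ * gb) = gv⁻¹ * gu * gj * gb * (gv⁻¹ * gu * gj) :=
  calc _ = (gb * gv⁻¹) * (gu⁻¹ * (gb * gu⁻¹ * gb)) := by rw [← gv_inv_gu_inv]; group
    _ = gv⁻¹ * (gb * (gb * gu⁻¹ * gb)) * gu⁻¹ := by
      rw [← commute_gv_gb.inv_left.eq, commute_gu_gb_gu_inv_gb.inv_left.eq]; group
    _ = gv⁻¹ * gu * gj * gb * (gu * gv * gu⁻¹) := by rw [gb_mul_gb_gu_inv_gb]; group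
    _ = _ := by
      rw [gu_gv_gu_inv, mul_assoc gj, (commute_gj_gv.inv_right.mul_right commute_gj_gu).eq]

/-! ### Normal forms for the subgroup generated by `u` and `v` -/

/-- Normal forms `t v^q j^a` for the elements of the finite group `⟨u, v⟩` of order `288`, where
`t` is the entry number `rep` of the list `1, u, vu, v²u, v³u, uv³u` of representatives of the
cosets of `⟨v, j⟩`. -/
structure NormalForm where
  rep : Fin 6
  vExp : Fin 4
  jExp : Fin 12
deriving DecidableEq

namespace NormalForm

section Eval

variable {M N : Type*} [Monoid M] [Monoid N]

/-- The coset representatives of `NormalForm`, for arbitrary elements `u` and `v` of a monoid. -/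
def repEval (u v : M) : Fin 6 → M := ![1, u, v * u, v ^ 2 * u, v ^ 3 * u, u * v ^ 3 * u]

/-- The value of a normal form, for arbitrary elements `u` and `v` of a monoid. -/
def eval (u v : M) (x : NormalForm) : M :=
  repEval u v x.rep * (v ^ (x.vExp : ℕ) * ((u * v) ^ 2) ^ (x.jExp : ℕ))

theorem map_repEval (f : M →* N) (u v : M) (i : Fin 6) :
    f (repEval u v i) = repEval (f u) (f v) i := by
  fin_cases i <;> simp [repEval]

theorem map_eval (f : M →* N) (u v : M) (x : NormalForm) :
    f (eval u v x) = eval (f u) (f v) x := by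
  simp only [eval, map_mul, map_pow, map_repEval]

end Eval

/-- The element of the group represented by a normal form. -/
def val (x : NormalForm) : CS := repEval gu gv x.rep * (gv ^ (x.vExp : ℕ) * gj ^ (x.jExp : ℕ))

theorem gv_pow_val_add (q r : Fin 4) :
    gv ^ ((q + r : Fin 4) : ℕ) = gv ^ (q : ℕ) * gv ^ (r : ℕ) := by
  rw [Fin.val_add, ← pow_eq_pow_mod _ gv_pow_four, pow_add]

theorem gj_pow_val_add (a c : Fin 12) :
    gj ^ ((a + c : Fin 12) : ℕ) = gj ^ (a : ℕ) * gj ^ (c : ℕ) := by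
  rw [Fin.val_add, ← pow_eq_pow_mod _ gj_pow_twelve, pow_add]

theorem commute_gj_pow_gv_pow (a q : ℕ) : Commute (gj ^ a) (gv ^ q) := commute_gj_gv.pow_pow a q

/-- Multiplication on the right by `v^q j^a`. -/
def shift (x : NormalForm) (q : Fin 4) (a : Fin 12) : NormalForm :=
  ⟨x.rep, x.vExp + q, x.jExp + a⟩

theorem val_shift (x : NormalForm) (q : Fin 4) (a : Fin 12) :
    (x.shift q a).val = x.val * (gv ^ (q : ℕ) * gj ^ (a : ℕ)) := by
  simp only [val, shift, gv_pow_val_add, gj_pow_val_add, mul_assoc]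
  rw [← mul_assoc (gj ^ (x.jExp : ℕ)) (gv ^ _), (commute_gj_pow_gv_pow _ _).eq, mul_assoc]

theorem val_mk (i : Fin 6) (q : Fin 4) (a : Fin 12) :
    (⟨i, q, a⟩ : NormalForm).val =
      (⟨i, 0, 0⟩ : NormalForm).val * (gv ^ (q : ℕ) * gj ^ (a : ℕ)) := by
  rw [← val_shift]; simp [shift]

/-- The product of `u` with a coset representative. -/
def guMulRep : Fin 6 → NormalForm :=
  ![⟨1, 0, 0⟩, ⟨2, 1, 11⟩, ⟨0, 3, 1⟩, ⟨4, 3, 2⟩, ⟨5, 0, 0⟩, ⟨3, 1, 10⟩]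

/-- The product of `v` with a coset representative. -/
def gvMulRep : Fin 6 → NormalForm :=
  ![⟨0, 1, 0⟩, ⟨2, 0, 0⟩, ⟨3, 0, 0⟩, ⟨4, 0, 0⟩, ⟨1, 0, 0⟩, ⟨5, 3, 3⟩]

theorem gu_mul_gu_eq : gu * gu = gv * gu * gv * gj⁻¹ := by
  rw [gv_gu_gv, gu_mul_gu, commute_gj_gu.inv_right.eq, mul_inv_cancel_right]

theorem gj_pow_ten : gj ^ 10 = gj⁻¹ * gj⁻¹ := by
  rw [← mul_inv_rev, eq_inv_iff_mul_eq_one, ← pow_two, ← pow_add, gj_pow_twelve]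

theorem gu_mul_gu_gv_inv_gu : gu * (gu * gv⁻¹ * gu) = gv ^ 2 * gu * (gv * (gj⁻¹ * gj⁻¹)) :=
  calc gu * (gu * gv⁻¹ * gu) = (gu * gu) * gv⁻¹ * gu := by group
    _ = gv * gu * gv * (gj⁻¹ * gv⁻¹) * gu := by rw [gu_mul_gu_eq]; group
    _ = gv * gu * (gj⁻¹ * gu) := by rw [commute_gj_gv.inv_inv.eq]; group
    _ = gv * (gu * gu) * gj⁻¹ := by rw [commute_gj_gu.inv_left.eq]; group
    _ = _ := by rw [gu_mul_gu_eq, pow_two]; group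

theorem val_guMulRep (i : Fin 6) : (guMulRep i).val = gu * repEval gu gv i := by
  have hj2 : gu * gv ^ 2 * gu = gv⁻¹ * gu * (gv⁻¹ * gj ^ 2) := by
    rw [gu_gv_sq_gu, (((commute_gj_gv.inv_right.mul_right commute_gj_gu).mul_right
      commute_gj_gv.inv_right).pow_left 2).eq, mul_assoc]
  have hvu : gu * (gv * gu) = gv⁻¹ * gj := by
    rw [← mul_assoc, gu_gv_gu, commute_gj_gv.inv_right.eq]
  fin_cases i
  · simp [guMulRep, val, repEval]
  · simp [guMulRep, val, repEval, gj_pow_eleven, gu_mul_gu_eq, mul_assoc]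
  · simp [guMulRep, val, repEval, gv_pow_three, hvu]
  · simp [guMulRep, val, repEval, gv_pow_three, ← mul_assoc, hj2]
  · simp [guMulRep, val, repEval, mul_assoc]
  · simp [guMulRep, val, repEval, gv_pow_three, gj_pow_ten, gu_mul_gu_gv_inv_gu]

theorem val_gvMulRep (i : Fin 6) : (gvMulRep i).val = gv * repEval gu gv i := by
  have h5 : gv * (gu * gv⁻¹ * gu) = gu * gv⁻¹ * gu * (gv⁻¹ * gj ^ 3) := by
    have hj : Commute gj (gu * gv⁻¹ * gu * gv⁻¹) :=
      ((commute_gj_gu.mul_right commute_gj_gv.inv_right).mul_right commute_gj_gu).mul_right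
        commute_gj_gv.inv_right
    rw [gv_mul_gu_gv_inv_gu, mul_assoc, (hj.pow_left 3).eq, mul_assoc]
  fin_cases i
  · simp [gvMulRep, val, repEval]
  · simp [gvMulRep, val, repEval]
  · simp [gvMulRep, val, repEval, ← mul_assoc, ← pow_two]
  · simp [gvMulRep, val, repEval, ← mul_assoc, ← pow_succ']
  · simp [gvMulRep, val, repEval, ← mul_assoc, ← pow_succ', gv_pow_four]
  · simp [gvMulRep, val, repEval, gv_pow_three, h5]

/-- Multiplication on the left by `u`. -/
def guMul (x : NormalForm) : NormalForm := (guMulRep x.rep).shift x.vExp x.jExp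

/-- Multiplication on the left by `v`. -/
def gvMul (x : NormalForm) : NormalForm := (gvMulRep x.rep).shift x.vExp x.jExp

theorem val_guMul (x : NormalForm) : x.guMul.val = gu * x.val := by
  rw [guMul, val_shift, val_guMulRep, val, mul_assoc]

theorem val_gvMul (x : NormalForm) : x.gvMul.val = gv * x.val := by
  rw [gvMul, val_shift, val_gvMulRep, val, mul_assoc]

theorem val_iterate_gvMul (n : ℕ) (x : NormalForm) : (gvMul^[n] x).val = gv ^ n * x.val := by
  induction n with
  | zero => simp
  | succ n ih => rw [Function.iterate_succ_apply', val_gvMul, ih, pow_succ', mul_assoc]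

/-- Multiplication on the left by a coset representative. -/
def repMul : Fin 6 → NormalForm → NormalForm :=
  ![id, guMul, fun x => gvMul (guMul x), fun x => gvMul^[2] (guMul x),
    fun x => gvMul^[3] (guMul x), fun x => guMul (gvMul^[3] (guMul x))]

theorem val_repMul (i : Fin 6) (x : NormalForm) : (repMul i x).val = repEval gu gv i * x.val := by
  fin_cases i <;>
    simp only [repMul, repEval, Fin.mk_one, Fin.zero_eta, Fin.reduceFinMk, Matrix.cons_val, id_eq,
      one_mul, val_iterate_gvMul, val_guMul, val_gvMul, mul_assoc]

instance : One NormalForm := ⟨⟨0, 0, 0⟩⟩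

instance : Mul NormalForm :=
  ⟨fun x y => repMul x.rep (gvMul^[x.vExp] (y.shift 0 x.jExp))⟩

theorem val_one : (1 : NormalForm).val = 1 := by
  change (⟨0, 0, 0⟩ : NormalForm).val = 1
  simp [val, repEval]

theorem commute_gj_repEval (i : Fin 6) : Commute gj (repEval gu gv i) := by
  have hu := commute_gj_gu
  have hv := fun n : ℕ => commute_gj_gv.pow_right n
  fin_cases i
  exacts [.one_right gj, hu, commute_gj_gv.mul_right hu, (hv 2).mul_right hu,
    (hv 3).mul_right hu, (hu.mul_right (hv 3)).mul_right hu]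

theorem commute_gj_val (x : NormalForm) : Commute gj x.val :=
  (commute_gj_repEval _).mul_right
    ((commute_gj_gv.pow_right _).mul_right ((Commute.refl gj).pow_right _))

theorem val_mul (x y : NormalForm) : (x * y).val = x.val * y.val := by
  change (repMul x.rep (gvMul^[x.vExp] (y.shift 0 x.jExp))).val = _
  rw [val_repMul, val_iterate_gvMul, val_shift, Fin.val_zero, pow_zero, one_mul,
    ← ((commute_gj_val y).pow_left _).eq]
  simp only [val, mul_assoc]

/-- The inverses of the coset representatives. -/
def repInv : Fin 6 → NormalForm :=
  ![⟨0, 0, 0⟩, ⟨2, 1, 11⟩, ⟨2, 0, 11⟩, ⟨2, 3, 11⟩, ⟨2, 2, 11⟩, ⟨5, 0, 1⟩]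

theorem repInv_mul (i : Fin 6) : repInv i * ⟨i, 0, 0⟩ = 1 := by
  decide +revert

instance : Inv NormalForm := ⟨fun x => ⟨0, -x.vExp, -x.jExp⟩ * repInv x.rep⟩

theorem val_inv (x : NormalForm) : x⁻¹.val = x.val⁻¹ := by
  obtain ⟨i, q, a⟩ := x
  refine eq_inv_of_mul_eq_one_left ?_
  change (⟨0, -q, -a⟩ * repInv i : NormalForm).val * _ = 1
  rw [val_mk i, val_mul, mul_assoc, ← mul_assoc (repInv i).val, ← val_mul, repInv_mul, val_one,
    one_mul, ← val_shift, shift]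
  simp only [neg_add_cancel]
  exact val_one

theorem val_two_one_eleven : NormalForm.val ⟨2, 1, 11⟩ = gu⁻¹ := by
  rw [show (⟨2, 1, 11⟩ : NormalForm) = ⟨1, 0, 0⟩⁻¹ by decide, val_inv]
  simp [NormalForm.val, repEval]

end NormalForm

/-! ### Words in three double cosets of `⟨u, v⟩` -/

/-- The double coset representatives `1, b, bu⁻¹b`, for arbitrary elements `u` and `b` of a monoid
(`u⁻¹` is written `u²`). -/
def midEval {M : Type*} [Monoid M] (u b : M) : Fin 3 → M := ![1, b, b * u ^ 2 * b]

/-- The double coset representatives `1, b, bu⁻¹b` in the group. -/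
abbrev midRep : Fin 3 → CS := midEval gu gb

theorem midRep_zero : midRep 0 = 1 := rfl

theorem midRep_one : midRep 1 = gb := rfl

theorem midRep_two : midRep 2 = gb * gu⁻¹ * gb := by
  rw [← gu_mul_gu, ← pow_two]; rfl

/-- A word `x σ y`, where `σ` is entry number `mid` of the list `1, b, bu⁻¹b` and `x`, `y` are
normal forms. -/
structure CosetWord where
  mid : Fin 3
  left : NormalForm
  right : NormalForm

namespace CosetWord

open NormalForm

/-- The element of the group represented by a word. -/
def val (t : CosetWord) : CS := t.left.val * midRep t.mid * t.right.val

/-- Multiplication on the left by a normal form. -/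
def leftMul (x : NormalForm) (t : CosetWord) : CosetWord := ⟨t.mid, x * t.left, t.right⟩

theorem val_leftMul (x : NormalForm) (t : CosetWord) : (leftMul x t).val = x.val * t.val := by
  simp only [leftMul, val, val_mul, mul_assoc]

/-- Multiplication on the right by a normal form. -/
def rightMul (t : CosetWord) (y : NormalForm) : CosetWord := ⟨t.mid, t.left, t.right * y⟩

theorem val_rightMul (t : CosetWord) (y : NormalForm) : (rightMul t y).val = t.val * y.val := by
  simp only [rightMul, val, val_mul, mul_assoc]

/-- The triples `(s, c, t)` in this list satisfy `b c σ = t`, where `σ` is the double coset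
representative number `s`. -/
def gbRules : List (Fin 3 × NormalForm × CosetWord) :=
  [(1, ⟨0, 0, 0⟩, ⟨1, ⟨0, 0, 1⟩, ⟨0, 3, 1⟩⟩),
    (1, ⟨0, 0, 1⟩, ⟨0, ⟨0, 1, 11⟩, ⟨0, 0, 0⟩⟩),
    (1, ⟨0, 0, 2⟩, ⟨1, ⟨0, 1, 11⟩, ⟨0, 1, 11⟩⟩),
    (1, ⟨1, 0, 11⟩, ⟨2, ⟨0, 3, 0⟩, ⟨0, 3, 0⟩⟩),
    (1, ⟨1, 0, 0⟩, ⟨1, ⟨1, 0, 0⟩, ⟨1, 0, 0⟩⟩),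
    (1, ⟨1, 0, 1⟩, ⟨1, ⟨2, 1, 11⟩, ⟨1, 1, 11⟩⟩),
    (1, ⟨1, 0, 2⟩, ⟨2, ⟨2, 0, 11⟩, ⟨0, 1, 11⟩⟩),
    (2, ⟨0, 0, 0⟩, ⟨1, ⟨1, 0, 1⟩, ⟨1, 1, 0⟩⟩),
    (2, ⟨0, 0, 1⟩, ⟨1, ⟨3, 1, 10⟩, ⟨0, 0, 0⟩⟩),
    (2, ⟨1, 0, 0⟩, ⟨1, ⟨1, 0, 1⟩, ⟨0, 3, 1⟩⟩),
    (2, ⟨1, 1, 11⟩, ⟨1, ⟨4, 0, 1⟩, ⟨4, 0, 1⟩⟩),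
    (2, ⟨1, 1, 0⟩, ⟨1, ⟨2, 1, 10⟩, ⟨2, 1, 11⟩⟩),
    (2, ⟨1, 0, 1⟩, ⟨1, ⟨3, 1, 10⟩, ⟨1, 0, 0⟩⟩)]

theorem val_of_mem_gbRules :
    ∀ r ∈ gbRules, r.2.2.val = gb * (r.2.1.val * midRep r.1) := by
  have hju : NormalForm.val ⟨2, 1, 10⟩ = gj⁻¹ * gu⁻¹ := by
    rw [show (⟨2, 1, 10⟩ : NormalForm) = ⟨0, 0, 11⟩ * ⟨2, 1, 11⟩ by decide, val_mul,
      val_two_one_eleven]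
    simp [NormalForm.val, repEval, gj_pow_eleven]
  have hvju : NormalForm.val ⟨3, 1, 10⟩ = gv * gj⁻¹ * gu⁻¹ := by
    rw [show (⟨3, 1, 10⟩ : NormalForm) = ⟨0, 1, 11⟩ * ⟨2, 1, 11⟩ by decide, val_mul,
      val_two_one_eleven]
    simp [NormalForm.val, repEval, gj_pow_eleven]
  have hvju' : NormalForm.val ⟨2, 0, 11⟩ = gv * gj⁻¹ * gu := by
    rw [show (⟨2, 0, 11⟩ : NormalForm) = ⟨0, 1, 11⟩ * ⟨1, 0, 0⟩ by decide, val_mul]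
    simp [NormalForm.val, repEval, gj_pow_eleven]
  simp only [gbRules, List.forall_mem_cons, val, val_two_one_eleven, hju, hvju, hvju', midRep_zero,
    midRep_one, midRep_two]
  simp only [NormalForm.val, repEval]
  refine ⟨?_, ?_, ?_, ?_, ?_, ?_, ?_, ?_, ?_, ?_, ?_, ?_, ?_, by simp⟩
  · simp [gv_pow_three, gb_mul_gb_eq, mul_assoc]
  · simp [gj_pow_eleven, ← gb_gj_gb, mul_assoc]
  · simpa [gj_pow_eleven, mul_assoc] using gb_gj_sq_gb.symm
  · simpa [gv_pow_three, gj_pow_eleven, mul_assoc] using gb_gu_gj_inv_gb.symm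
  · simpa [mul_assoc] using gb_gu_gb.symm
  · simpa [gj_pow_eleven, mul_assoc] using gb_gu_gj_gb.symm
  · simpa [gj_pow_eleven, mul_assoc] using gb_gu_gj_sq_gb.symm
  · simpa [mul_assoc] using gb_mul_gb_gu_inv_gb.symm
  · simpa [mul_assoc] using gb_gj_gb_gu_inv_gb.symm
  · simpa [gv_pow_three, mul_assoc] using gb_gu_gb_gu_inv_gb.symm
  · simpa [gv_pow_three, gj_pow_eleven, mul_assoc] using gb_gu_gv_gj_inv_gb_gu_inv_gb.symm
  · simpa [mul_assoc] using gb_gu_gv_gb_gu_inv_gb.symm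
  · simpa [mul_assoc] using gb_gu_gj_gb_gu_inv_gb.symm

/-- The exponents and normal form `(p, c, r)` of a splitting `x = v^p c v^r`, with `r = 0` unless
`s = 1`, which brings the product `b x σ` with the double coset representative number `s` into the
scope of `gbRules`: `v` commutes with `b`, but not with `bu⁻¹b`. -/
def gvSplit (s : Fin 3) (x : NormalForm) : Fin 4 × NormalForm × Fin 4 :=
  if s = 1 then (![0, 0, 1, 2, 3, 0] x.rep, ⟨![0, 1, 1, 1, 1, 5] x.rep, 0, x.jExp⟩, x.vExp)
  else if x.rep = 0 then (x.vExp, ⟨0, 0, x.jExp⟩, 0)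
  else (![0, 0, 1, 2, 3, 0] x.rep, ⟨![0, 1, 1, 1, 1, 5] x.rep, x.vExp, x.jExp⟩, 0)

theorem repEval_eq_gv_pow_mul (i : Fin 6) :
    repEval gu gv i =
      gv ^ (![0, 0, 1, 2, 3, 0] i : Fin 4).val * repEval gu gv (![0, 1, 1, 1, 1, 5] i) := by
  fin_cases i <;> simp [repEval]

theorem val_eq_gvSplit (s : Fin 3) (x : NormalForm) :
    x.val = gv ^ (gvSplit s x).1.val * (gvSplit s x).2.1.val * gv ^ (gvSplit s x).2.2.val := by
  unfold gvSplit
  split_ifs with hs hx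
  · simp only [NormalForm.val, repEval_eq_gv_pow_mul x.rep, Fin.val_zero, pow_zero, one_mul,
      mul_assoc, (commute_gj_pow_gv_pow _ _).eq]
  · simp [NormalForm.val, hx, repEval]
  · simp only [NormalForm.val, repEval_eq_gv_pow_mul x.rep, Fin.val_zero, pow_zero, mul_one,
      mul_assoc]

theorem gv_pow_gvSplit_mul_midRep (s : Fin 3) (x : NormalForm) :
    gv ^ (gvSplit s x).2.2.val * midRep s = midRep s * gv ^ (gvSplit s x).2.2.val := by
  unfold gvSplit
  split_ifs with hs hx
  · rw [hs, midRep_one, (commute_gv_gb.pow_left _).eq]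
  · simp
  · simp

/-- Multiplication on the left by `b`, where the result is known to be a word. -/
def gbMul (t : CosetWord) : Option CosetWord :=
  if t.mid = 0 then some ⟨1, 1, t.left * t.right⟩ else
    let split := gvSplit t.mid t.left
    (gbRules.find? fun rule => rule.1 = t.mid ∧ rule.2.1 = split.2.1).map fun rule =>
      rightMul (leftMul ⟨0, split.1, 0⟩ rule.2.2) (⟨0, split.2.2, 0⟩ * t.right)

theorem val_of_mem_gbMul {t t' : CosetWord} (h : t' ∈ gbMul t) : t'.val = gb * t.val := by
  have val_gv_pow : ∀ p : Fin 4, NormalForm.val ⟨0, p, 0⟩ = gv ^ (p : ℕ) := fun p => by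
    simp [NormalForm.val, repEval]
  by_cases h0 : t.mid = 0
  · rw [gbMul, if_pos h0] at h
    obtain rfl := Option.some.inj h
    simp [val, h0, midRep_one, midRep_zero, val_one, val_mul]
  · rw [gbMul, if_neg h0] at h
    obtain ⟨rule, hrule, rfl⟩ := Option.map_eq_some_iff.1 h
    obtain ⟨hs, hc⟩ : rule.1 = t.mid ∧ rule.2.1 = (gvSplit t.mid t.left).2.1 := by
      simpa using List.find?_some hrule
    rw [val_rightMul, val_leftMul, val_of_mem_gbRules rule (List.mem_of_find?_eq_some hrule), hs,
      hc, val_mul, val_gv_pow, val_gv_pow, val, val_eq_gvSplit t.mid t.left]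
    simp only [mul_assoc]
    rw [← mul_assoc (midRep _), ← gv_pow_gvSplit_mul_midRep, ← mul_assoc (gv ^ _) gb,
      (commute_gv_gb.pow_left _).eq]
    simp only [mul_assoc]

/-- Multiplication on the left by a double coset representative, where the result is known to be a
word. -/
def midRepMul : Fin 3 → CosetWord → Option CosetWord :=
  ![some, gbMul, fun t => (gbMul t).bind fun t' => gbMul (leftMul ⟨1, 0, 0⟩⁻¹ t')]

theorem val_of_mem_midRepMul {s : Fin 3} {t t' : CosetWord} (h : t' ∈ midRepMul s t) :
    t'.val = midRep s * t.val := by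
  fin_cases s
  · obtain rfl := Option.some.inj h
    simp [midRep_zero]
  · exact val_of_mem_gbMul h
  · obtain ⟨t'', h', h''⟩ := Option.bind_eq_some_iff.1 h
    rw [val_of_mem_gbMul h'', val_leftMul, val_of_mem_gbMul h', val_inv]
    simp [NormalForm.val, repEval, midRep_two, mul_assoc]

end CosetWord

theorem mul_midRep_mul_mem_range_val {x y : CS} (hx : x ∈ Set.range NormalForm.val)
    (hy : y ∈ Set.range NormalForm.val) (n : Fin 3) :
    x * midRep n * y ∈ Set.range CosetWord.val := by
  obtain ⟨⟨x, rfl⟩, ⟨y, rfl⟩⟩ := And.intro hx hy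
  exact ⟨⟨n, x, y⟩, rfl⟩

theorem one_mem_range_val : 1 ∈ Set.range CosetWord.val :=
  ⟨⟨0, 1, 1⟩, by simp [CosetWord.val, NormalForm.val_one, midRep_zero]⟩

/-! ### A projective representation over `ℤ[ζ₁₂]` -/

section

open Matrix ComplexConjugate

/-- The ring `ℤ[ζ]` generated by a primitive twelfth root of unity `ζ`, presented as a quadratic
algebra over `ℤ[√3]` by the equation `ζ² = √3 ζ - 1`. The element `⟨⟨a, b⟩, ⟨c, d⟩⟩` is
`(a + b√3) + (c + d√3) ζ`, and `star` is complex conjugation. -/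
abbrev CycInt : Type := QuadraticAlgebra (ℤ√3) (-1) Zsqrtd.sqrtd

namespace CycInt

open QuadraticAlgebra (norm trace)

/-- The real embedding of `ℤ[√3]`. -/
noncomputable abbrev realHom : ℤ√3 →+* ℝ := Zsqrtd.toReal (by norm_num : (0 : ℤ) ≤ 3)

theorem realHom_apply (a b : ℤ) : realHom ⟨a, b⟩ = a + b * √3 := by
  simp [realHom, Zsqrtd.toReal]

/-- The complex number `ζ = exp(πi/6)`. -/
noncomputable def zeta : ℂ := ⟨√3 / 2, 1 / 2⟩

theorem zeta_mul_zeta : zeta * zeta = √3 * zeta - 1 := by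
  have h := Real.mul_self_sqrt (show (0 : ℝ) ≤ 3 by norm_num)
  apply Complex.ext <;> simp [zeta] <;> linarith

theorem conj_zeta : conj zeta = √3 - zeta := by
  apply Complex.ext <;> simp [zeta]
  ring

/-- The embedding of `ℤ[ζ]` into the complex numbers. -/
noncomputable def toComplex : CycInt →+* ℂ where
  toFun x := realHom x.re + realHom x.im * zeta
  map_one' := by rw [QuadraticAlgebra.re_one, QuadraticAlgebra.im_one]; simp
  map_zero' := by simp
  map_add' x y := by simp; ring
  map_mul' x y := by
    have h : realHom Zsqrtd.sqrtd = √3 := by simp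
    simp only [QuadraticAlgebra.re_mul, QuadraticAlgebra.im_mul, map_add, map_mul, map_neg,
      map_one, h]
    push_cast
    linear_combination (-realHom x.im * realHom y.im : ℂ) * zeta_mul_zeta

theorem toComplex_mk (a b c d : ℤ) :
    toComplex ⟨⟨a, b⟩, ⟨c, d⟩⟩ = a + b * √3 + (c + d * √3) * zeta := by
  simp only [toComplex, RingHom.coe_mk, MonoidHom.coe_mk, OneHom.coe_mk, realHom_apply]
  push_cast
  rfl

theorem toComplex_algebraMap (r : ℤ√3) : toComplex (algebraMap _ CycInt r) = realHom r := by
  simp [toComplex]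

theorem toComplex_star (x : CycInt) : toComplex (star x) = conj (toComplex x) := by
  have h : realHom Zsqrtd.sqrtd = √3 := by simp
  simp only [toComplex, RingHom.coe_mk, MonoidHom.coe_mk, OneHom.coe_mk, QuadraticAlgebra.re_star,
    QuadraticAlgebra.im_star, map_add, map_mul, map_neg, Complex.conj_ofReal, conj_zeta, h]
  push_cast
  ring

theorem normSq_toComplex (x : CycInt) : Complex.normSq (toComplex x) = realHom (norm x) := by
  have h := congrArg toComplex (QuadraticAlgebra.algebraMap_norm_eq_mul_star x)
  rw [toComplex_algebraMap, map_mul, toComplex_star, Complex.mul_conj] at h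
  exact_mod_cast h.symm

theorem two_mul_re_toComplex (x : CycInt) : 2 * (toComplex x).re = realHom (trace x) := by
  have h := congrArg toComplex (QuadraticAlgebra.algebraMap_trace_eq_add_star x)
  rw [toComplex_algebraMap, map_add, toComplex_star, Complex.add_conj] at h
  exact_mod_cast h.symm

end CycInt

/-- The matrix representing `u`. -/
def matU : Matrix (Fin 3) (Fin 3) CycInt :=
  !![0, ⟨⟨-1, 0⟩, ⟨1, 0⟩⟩, 0; ⟨⟨-1, 0⟩, ⟨-1, 0⟩⟩, ⟨⟨-1, 0⟩, ⟨0, 1⟩⟩, 0; 0, 0, 1]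

/-- The matrix representing `v`. -/
def matV : Matrix (Fin 3) (Fin 3) CycInt :=
  !![1, ⟨⟨-1, 0⟩, ⟨-1, 1⟩⟩, 0; 0, ⟨⟨0, -1⟩, ⟨2, 0⟩⟩, 0; 0, 0, 1]

/-- The matrix representing `b`. -/
def matB : Matrix (Fin 3) (Fin 3) CycInt :=
  !![⟨⟨-2, -1⟩, ⟨1, 1⟩⟩, ⟨⟨0, 1⟩, ⟨-1, 0⟩⟩, ⟨⟨0, 1⟩, ⟨-1, 0⟩⟩; 0, 1, 0;
    ⟨⟨-3, -1⟩, ⟨1, 1⟩⟩, ⟨⟨0, 1⟩, ⟨-1, 0⟩⟩, ⟨⟨1, 1⟩, ⟨-1, 0⟩⟩]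

theorem matU_pow_three : matU ^ 3 = 1 := by decide +kernel

theorem matV_pow_four : matV ^ 4 = 1 := by decide +kernel

theorem matB_pow_three : matB ^ 3 = 1 := by decide +kernel

theorem matU_mul_matV_sq :
    (matU * matV) ^ 2 = diagonal ![QuadraticAlgebra.omega, QuadraticAlgebra.omega, 1] := by
  decide +kernel

theorem matV_mul_matU_sq :
    (matV * matU) ^ 2 = diagonal ![QuadraticAlgebra.omega, QuadraticAlgebra.omega, 1] := by
  decide +kernel

theorem matV_mul_matB : matV * matB = matB * matV := by decide +kernel

theorem matB_mul_matU_mul_matV_pow_three :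
    (matB * matU * matV) ^ 3 = scalar (Fin 3) (star QuadraticAlgebra.omega) := by
  decide +kernel

theorem matB_mul_matU_mul_matV_mul_matU_sq_mul_matV :
    (matB * matU * matV * matU) ^ 2 * matV =
      scalar (Fin 3) (star QuadraticAlgebra.omega) := by
  decide +kernel

end

/-! ### Heights of products of double coset representatives -/

section

open Matrix NormalForm CosetWord

theorem commute_matV_pow_matU_mul_matV_sq_pow (q a : ℕ) :
    Commute (matV ^ q) (((matU * matV) ^ 2) ^ a) := by
  have h : Commute matV ((matU * matV) ^ 2) := by
    rw [Commute, SemiconjBy, matU_mul_matV_sq]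
    decide +kernel
  exact h.pow_pow q a

/-- The numbers `p` and `r` such that `ω ^ a * p + r` is the lower right entry of the matrix of
`σ x τ`, where `σ` and `τ` are the double coset representatives number `n` and `m` and `x` is the
normal form `⟨i, q, a⟩`. -/
def heightParts (n m : Fin 3) (i : Fin 6) (q : Fin 4) : CycInt × CycInt :=
  let row := (midEval matU matB n * repEval matU matV i) 2
  let col := fun k => (matV ^ (q : ℕ) * midEval matU matB m) k 2
  (row 0 * col 0 + row 1 * col 1, row 2 * col 2)

theorem midEval_mul_eval_mul_midEval_apply (n m : Fin 3) (x : NormalForm) :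
    (midEval matU matB n * x.eval matU matV * midEval matU matB m) 2 2 =
      QuadraticAlgebra.omega ^ (x.jExp : ℕ) * (heightParts n m x.rep x.vExp).1 +
        (heightParts n m x.rep x.vExp).2 := by
  have h : midEval matU matB n * x.eval matU matV * midEval matU matB m =
      midEval matU matB n * repEval matU matV x.rep * ((matU * matV) ^ 2) ^ (x.jExp : ℕ) *
        (matV ^ (x.vExp : ℕ) * midEval matU matB m) := by
    rw [NormalForm.eval, (commute_matV_pow_matU_mul_matV_sq_pow _ _).eq]
    simp only [mul_assoc]
  rw [h, matU_mul_matV_sq, diagonal_pow, mul_apply, Fin.sum_univ_three, heightParts]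
  simp only [mul_diagonal, Pi.pow_apply, cons_val_zero, cons_val_one, cons_val, one_pow]
  ring

/-- A sufficient condition for a number `a + b√3` to be larger than `11`. -/
def IsLarge (r : ℤ√3) : Prop := 6 ≤ r.re ∧ 3 ≤ r.im

instance : DecidablePred IsLarge := fun r => inferInstanceAs (Decidable (6 ≤ r.re ∧ 3 ≤ r.im))

theorem eleven_lt_realHom {r : ℤ√3} (h : IsLarge r) : 11 < CycInt.realHom r := by
  obtain ⟨a, b⟩ := r
  have ha : (6 : ℝ) ≤ a := by exact_mod_cast h.1
  have hb : (3 : ℝ) ≤ b := by exact_mod_cast h.2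
  have hs : (1.7 : ℝ) < √3 := Real.lt_sqrt_of_sq_lt (by norm_num)
  rw [CycInt.realHom_apply]
  nlinarith

/-- The square of the absolute value of `ζ p + r`, for the two entries of the pair `(p, r)`. -/
def heightNorm (parts : CycInt × CycInt) (ζ : CycInt) : ℤ√3 :=
  QuadraticAlgebra.norm (ζ * parts.1 + parts.2)

theorem isLarge_or_isSome_midRepMul_one (m : Fin 3) (hm : m ≠ 0) :
    ∀ i q, ∀ a : Fin 12,
      IsLarge (heightNorm (heightParts 1 m i q) (QuadraticAlgebra.omega ^ (a : ℕ))) ∨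
        (midRepMul 1 ⟨m, ⟨i, q, a⟩, 1⟩).isSome := by
  obtain rfl | rfl : m = 1 ∨ m = 2 := by lia
  all_goals decide +kernel

/-- As `u` commutes with `bu⁻¹b`, the normal form may first be multiplied by a power of `u`. -/
theorem isLarge_or_isSome_midRepMul_two (m : Fin 3) (hm : m ≠ 0) :
    ∀ i q, ∀ a : Fin 12,
      IsLarge (heightNorm (heightParts 2 m i q) (QuadraticAlgebra.omega ^ (a : ℕ))) ∨
        ∃ k : Fin 3, (midRepMul 2 ⟨m, guMul^[k] ⟨i, q, a⟩, 1⟩).isSome := by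
  obtain rfl | rfl : m = 1 ∨ m = 2 := by lia
  all_goals decide +kernel

theorem mem_range_val_of_isSome {n m : Fin 3} {x : NormalForm}
    (h : (midRepMul n ⟨m, x, 1⟩).isSome) :
    midRep n * x.val * midRep m ∈ Set.range CosetWord.val := by
  obtain ⟨t, ht⟩ := Option.isSome_iff_exists.1 h
  exact ⟨t, by rw [val_of_mem_midRepMul ht, CosetWord.val, val_one, mul_one, mul_assoc]⟩

theorem val_mul_mem_range_val {g : CS} (hg : g ∈ Set.range CosetWord.val) (x y : NormalForm) :
    x.val * g * y.val ∈ Set.range CosetWord.val := by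
  obtain ⟨t, rfl⟩ := hg
  exact ⟨leftMul x (rightMul t y), by rw [val_leftMul, val_rightMul, mul_assoc]⟩

theorem commute_gu_midRep_two : Commute gu (midRep 2) := by
  rw [midRep_two]
  exact commute_gu_gb_gu_inv_gb

theorem val_iterate_guMul (k : ℕ) (x : NormalForm) : (guMul^[k] x).val = gu ^ k * x.val := by
  induction k with
  | zero => simp
  | succ k ih => rw [Function.iterate_succ_apply', val_guMul, ih, pow_succ', mul_assoc]

theorem isLarge_or_midRep_mul_val_mul_midRep_mem (n m : Fin 3) (x : NormalForm) :
    IsLarge (QuadraticAlgebra.norm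
      ((midEval matU matB n * x.eval matU matV * midEval matU matB m) 2 2)) ∨
      midRep n * x.val * midRep m ∈ Set.range CosetWord.val := by
  have hnorm : QuadraticAlgebra.norm
      ((midEval matU matB n * x.eval matU matV * midEval matU matB m) 2 2) =
      heightNorm (heightParts n m x.rep x.vExp) (QuadraticAlgebra.omega ^ (x.jExp : ℕ)) := by
    rw [midEval_mul_eval_mul_midEval_apply, heightNorm]
  rw [hnorm]
  obtain rfl | hm := eq_or_ne m 0
  · exact .inr ⟨⟨n, 1, x⟩, by simp [CosetWord.val, val_one, midRep_zero]⟩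
  obtain rfl | rfl | rfl : n = 0 ∨ n = 1 ∨ n = 2 := by lia
  · exact .inr ⟨⟨m, x, 1⟩, by simp [CosetWord.val, val_one, midRep_zero]⟩
  · exact (isLarge_or_isSome_midRepMul_one m hm _ _ _).imp_right mem_range_val_of_isSome
  · refine (isLarge_or_isSome_midRepMul_two m hm _ _ _).imp_right fun ⟨k, hk⟩ => ?_
    have hmem := val_mul_mem_range_val (mem_range_val_of_isSome hk)
      ((guMul^[k] 1)⁻¹) 1
    rw [val_inv, val_iterate_guMul, val_iterate_guMul, ← mul_assoc (midRep 2),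
      ← (commute_gu_midRep_two.pow_left _).eq, val_one] at hmem
    simpa [mul_assoc] using hmem

end

/-! ### The unitary group of signature `(2, 1)` -/

section

open Matrix Complex ComplexConjugate
open scoped Matrix.Module

/-- The Hermitian form `z̄₂w₂ - z̄₀w₀ - z̄₁w₁`. The lines on which it is positive are the points of
the complex hyperbolic plane. -/
noncomputable def lorentzForm : (Fin 3 → ℂ) →ₗ⋆[ℂ] (Fin 3 → ℂ) →ₗ[ℂ] ℂ :=
  LinearMap.mk₂'ₛₗ (starRingEnd ℂ) (RingHom.id ℂ)
    (fun z w => conj (z 2) * w 2 - conj (z 0) * w 0 - conj (z 1) * w 1)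
    (fun z z' w => by simp only [Pi.add_apply, map_add]; ring)
    (fun c z w => by simp only [Pi.smul_apply, smul_eq_mul, map_mul]; ring)
    (fun z w w' => by simp only [Pi.add_apply]; ring)
    (fun c z w => by simp only [Pi.smul_apply, smul_eq_mul, RingHom.id_apply]; ring)

theorem lorentzForm_apply (z w : Fin 3 → ℂ) :
    lorentzForm z w = conj (z 2) * w 2 - conj (z 0) * w 0 - conj (z 1) * w 1 := rfl

/-- The quadratic form `|z₂|² - |z₀|² - |z₁|²` of `lorentzForm`. -/
noncomputable def lorentzSq (z : Fin 3 → ℂ) : ℝ := normSq (z 2) - normSq (z 0) - normSq (z 1)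

theorem lorentzForm_self (z : Fin 3 → ℂ) : lorentzForm z z = lorentzSq z := by
  simp only [lorentzForm_apply, lorentzSq, ofReal_sub, normSq_eq_conj_mul_self]

theorem lorentzSq_smul (c : ℂ) (z : Fin 3 → ℂ) : lorentzSq (c • z) = normSq c * lorentzSq z := by
  simp only [lorentzSq, Pi.smul_apply, smul_eq_mul, normSq_mul]
  ring

/-- The vector `(0, 0, 1)`, representing the centre of the hyperbolic plane. -/
def origin : Fin 3 → ℂ := Pi.single 2 1

theorem lorentzSq_origin : lorentzSq origin = 1 := by simp [lorentzSq, origin]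

theorem lorentzForm_origin_left (z : Fin 3 → ℂ) : lorentzForm origin z = z 2 := by
  simp [lorentzForm_apply, origin]

theorem apply_two_ne_zero {z : Fin 3 → ℂ} (hz : 0 < lorentzSq z) : z 2 ≠ 0 := by
  intro h
  rw [lorentzSq, h, map_zero] at hz
  linarith [normSq_nonneg (z 0), normSq_nonneg (z 1)]

/-- The group of invertible matrices that preserve `lorentzForm`. -/
def U21 : Subgroup (GL (Fin 3) ℂ) where
  carrier := {g | ∀ z w : Fin 3 → ℂ, lorentzForm (g • z) (g • w) = lorentzForm z w}
  one_mem' z w := by rw [one_smul, one_smul]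
  mul_mem' {g h} hg hh z w := by rw [mul_smul, mul_smul, hg, hh]
  inv_mem' {g} hg z w := by rw [← hg, smul_inv_smul, smul_inv_smul]

namespace U21

theorem lorentzForm_smul_smul (g : U21) (z w : Fin 3 → ℂ) :
    lorentzForm (g • z) (g • w) = lorentzForm z w :=
  g.2 z w

theorem lorentzForm_smul_left (g : U21) (z w : Fin 3 → ℂ) :
    lorentzForm (g • z) w = lorentzForm z (g⁻¹ • w) := by
  rw [← lorentzForm_smul_smul g z, smul_inv_smul]

theorem lorentzSq_smul (g : U21) (z : Fin 3 → ℂ) : lorentzSq (g • z) = lorentzSq z := by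
  exact_mod_cast (lorentzForm_self _).symm.trans
    ((lorentzForm_smul_smul g z z).trans (lorentzForm_self z))

theorem smul_apply (g : U21) (z : Fin 3 → ℂ) (i : Fin 3) :
    (g • z) i = g.1 i 0 * z 0 + g.1 i 1 * z 1 + g.1 i 2 * z 2 :=
  Fin.sum_univ_three _

theorem smul_origin_apply (g : U21) (i : Fin 3) : (g • origin) i = g.1 i 2 := by
  simp [smul_apply, origin]

theorem normSq_column (g : U21) : normSq (g.1 0 2) + normSq (g.1 1 2) = normSq (g.1 2 2) - 1 := by
  have h := lorentzSq_smul g origin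
  rw [lorentzSq_origin, lorentzSq] at h
  simp only [smul_origin_apply] at h
  linarith

theorem normSq_row (g : U21) : normSq (g.1 2 0) + normSq (g.1 2 1) = normSq (g.1 2 2) - 1 := by
  have h (k : Fin 3) : conj (g.1 2 k) = lorentzForm (Pi.single k 1) (g⁻¹ • origin) := by
    rw [← lorentzForm_smul_left, lorentzForm_apply]
    fin_cases k <;> simp [smul_apply, origin]
  have hinv := normSq_column g⁻¹
  simp only [← normSq_conj (g.1 2 _), h, lorentzForm_apply, smul_origin_apply]
  simpa using hinv

end U21

/-- The number `|(g⁻¹z)₂|²`. Divided by `lorentzSq z`, it is the squared hyperbolic cosine of the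
distance from the point represented by `z` to the image of the centre under `g`. -/
noncomputable def coshForm (g : U21) (z : Fin 3 → ℂ) : ℝ := normSq ((g⁻¹ • z) 2)

theorem coshForm_one (z : Fin 3 → ℂ) : coshForm 1 z = normSq (z 2) := by
  rw [coshForm, inv_one, one_smul]

theorem coshForm_mul_smul (g h : U21) (z : Fin 3 → ℂ) :
    coshForm (g * h) (g • z) = coshForm h z := by
  rw [coshForm, _root_.mul_inv_rev, mul_smul, inv_smul_smul, coshForm]

theorem coshForm_self_smul (g : U21) (z : Fin 3 → ℂ) : coshForm g (g • z) = normSq (z 2) := by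
  rw [← coshForm_one, ← coshForm_mul_smul g 1, mul_one]

theorem coshForm_smul (g : U21) (c : ℂ) (z : Fin 3 → ℂ) :
    coshForm g (c • z) = normSq c * coshForm g z := by
  rw [coshForm, smul_comm, Pi.smul_apply, smul_eq_mul, normSq_mul, coshForm]

theorem normSq_mul_add_mul_le (a b c d : ℂ) :
    normSq (a * b + c * d) ≤ (normSq a + normSq c) * (normSq b + normSq d) := by
  have h : 0 ≤ normSq (a * conj d - c * conj b) := normSq_nonneg _
  simp only [normSq_apply, mul_re, mul_im, add_re, add_im, sub_re, sub_im, conj_re, conj_im] at *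
  linarith

/-- The case `ε = 7/16` of `|p - q|² ≤ (1 + ε)|p|² + (1 + ε⁻¹)|q|²`. -/
theorem normSq_sub_le (p q : ℂ) :
    normSq (p - q) ≤ 23 / 16 * normSq p + 23 / 7 * normSq q := by
  simp only [normSq_apply, sub_re, sub_im]
  nlinarith [sq_nonneg (7 * p.re + 16 * q.re), sq_nonneg (7 * p.im + 16 * q.im)]

namespace U21

/-- A quantitative triangle inequality: a point close to the centre and to its image under `g`
forces these two to be close to each other. -/
theorem normSq_apply_two_two_lt {g : U21} {z : Fin 3 → ℂ} (hz : 0 < lorentzSq z)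
    (h₁ : normSq (z 2) < 2.1 * lorentzSq z) (h₂ : coshForm g z < 2.1 * lorentzSq z) :
    normSq (g.1 2 2) < 11 := by
  set P : ℂ := conj (g.1 0 2) * z 0 + conj (g.1 1 2) * z 1 with hP
  set Q : ℂ := conj (g.1 2 2) * z 2 with hQ
  have hcosh : coshForm g z = normSq (P - Q) := by
    rw [coshForm, ← lorentzForm_origin_left (g⁻¹ • z), ← lorentzForm_smul_left, lorentzForm_apply,
      ← normSq_neg]
    simp only [smul_origin_apply, hP, hQ]
    congr 1; ring
  have hP' : normSq P ≤ (normSq (g.1 2 2) - 1) * (normSq (z 0) + normSq (z 1)) := by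
    rw [← normSq_column, ← normSq_conj (g.1 0 2), ← normSq_conj (g.1 1 2)]
    exact normSq_mul_add_mul_le _ _ _ _
  have hQ' : normSq Q = normSq (g.1 2 2) * normSq (z 2) := by rw [hQ, normSq_mul, normSq_conj]
  have hPQ : normSq Q ≤ 23 / 16 * normSq P + 23 / 7 * coshForm g z := by
    rw [hcosh]
    simpa using normSq_sub_le P (P - Q)
  have hd : 0 ≤ normSq (z 0) + normSq (z 1) := add_nonneg (normSq_nonneg _) (normSq_nonneg _)
  rw [show normSq (z 2) = lorentzSq z + (normSq (z 0) + normSq (z 1)) by rw [lorentzSq]; ring]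
    at h₁ hQ'
  by_contra! h
  nlinarith [mul_nonneg (sub_nonneg.2 h)
    (show 0 ≤ lorentzSq z - 7 / 16 * (normSq (z 0) + normSq (z 1)) by linarith)]

end U21

end

/-! ### The ball model of the complex hyperbolic plane -/

section

open Matrix Complex Metric Topology Filter
open scoped Matrix.Module

/-- The open unit ball of `ℂ²`, a model of the complex hyperbolic plane. -/
abbrev HypPlane : Type := ball (0 : EuclideanSpace ℂ (Fin 2)) 1

instance : LocallyPathConnectedSpace HypPlane := isOpen_ball.locallyPathConnectedSpace

instance : SimplyConnectedSpace HypPlane :=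
  have : ContractibleSpace HypPlane :=
    (convex_ball _ _).contractibleSpace (nonempty_ball.2 one_pos)
  inferInstance

/-- The vector `(t₀, t₁, 1)` that represents the point with affine coordinates `t`. -/
def affineVec (t : EuclideanSpace ℂ (Fin 2)) : Fin 3 → ℂ := ![t 0, t 1, 1]

theorem lorentzSq_affineVec (t : EuclideanSpace ℂ (Fin 2)) :
    lorentzSq (affineVec t) = 1 - ‖t‖ ^ 2 := by
  simp [lorentzSq, affineVec, EuclideanSpace.norm_sq_eq, normSq_eq_norm_sq]
  ring

theorem lorentzSq_affineVec_pos (t : HypPlane) : 0 < lorentzSq (affineVec t) := by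
  have ht : ‖(t : EuclideanSpace ℂ (Fin 2))‖ < 1 := mem_ball_zero_iff.1 t.2
  rw [lorentzSq_affineVec]
  nlinarith [norm_nonneg (t : EuclideanSpace ℂ (Fin 2))]

theorem exists_affineVec_eq_smul {z : Fin 3 → ℂ} (hz : 0 < lorentzSq z) :
    ∃ t : HypPlane, affineVec t = (z 2)⁻¹ • z := by
  have h₂ : z 2 ≠ 0 := apply_two_ne_zero hz
  set t : EuclideanSpace ℂ (Fin 2) := !₂[(z 2)⁻¹ * z 0, (z 2)⁻¹ * z 1]
  have ht : affineVec t = (z 2)⁻¹ • z := by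
    ext i; fin_cases i <;> simp [affineVec, t, h₂]
  refine ⟨⟨t, mem_ball_zero_iff.2 ?_⟩, ht⟩
  have hpos : 0 < lorentzSq (affineVec t) := by
    rw [ht, lorentzSq_smul]
    exact mul_pos (normSq_pos.2 (inv_ne_zero h₂)) hz
  rw [lorentzSq_affineVec] at hpos
  exact (sq_lt_one_iff₀ (norm_nonneg t)).1 (by linarith)

theorem smul_affineVec_apply_two (g : U21) (t : EuclideanSpace ℂ (Fin 2)) :
    (g • affineVec t) 2 = g.1 2 0 * t 0 + g.1 2 1 * t 1 + g.1 2 2 := by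
  simp [U21.smul_apply, affineVec]

/-- The hyperbolic ball about the image of the origin under `g`. The square of the hyperbolic
cosine of its radius is `r`. -/
def hypBall (r : ℝ) (g : U21) : Set HypPlane :=
  {t | coshForm g (affineVec t) < r * lorentzSq (affineVec t)}

/-- The closed version of `hypBall`. -/
def hypClosedBall (r : ℝ) (g : U21) : Set HypPlane :=
  {t | coshForm g (affineVec t) ≤ r * lorentzSq (affineVec t)}

theorem mem_hypBall_iff {t : HypPlane} {c : ℂ} {z : Fin 3 → ℂ} (h : affineVec t = c • z) {r : ℝ}
    {g : U21} : t ∈ hypBall r g ↔ coshForm g z < r * lorentzSq z := by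
  have hc : 0 < normSq c := by
    refine normSq_pos.2 fun hc => (lorentzSq_affineVec_pos t).ne' ?_
    rw [h, hc, lorentzSq_smul, map_zero, zero_mul]
  rw [hypBall, Set.mem_ofPred_eq, h, coshForm_smul, lorentzSq_smul, mul_left_comm,
    mul_lt_mul_iff_right₀ hc]

theorem isOpen_hypBall (r : ℝ) (g : U21) : IsOpen (hypBall r g) := by
  simp only [hypBall, coshForm, smul_affineVec_apply_two, lorentzSq_affineVec]
  exact isOpen_lt (by fun_prop) (by fun_prop)

theorem convexOn_norm_smul_affineVec (g : U21) :
    ConvexOn ℝ Set.univ fun t => ‖(g • affineVec t) 2‖ := by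
  refine ⟨convex_univ, fun x _ y _ a b ha hb hab => ?_⟩
  have h : (g • affineVec (a • x + b • y)) 2 =
      a • (g • affineVec x) 2 + b • (g • affineVec y) 2 := by
    have hab' : (a + b : ℂ) = 1 := by exact_mod_cast hab
    simp only [smul_affineVec_apply_two, PiLp.add_apply, PiLp.smul_apply, real_smul]
    linear_combination -(g.1 2 2) * hab'
  change ‖(g • affineVec (a • x + b • y)) 2‖ ≤ _
  rw [h]
  refine (norm_add_le _ _).trans_eq ?_
  rw [norm_smul_of_nonneg ha, norm_smul_of_nonneg hb, smul_eq_mul, smul_eq_mul]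

theorem isPreconnected_hypBall {r : ℝ} (hr : 0 ≤ r) (g : U21) : IsPreconnected (hypBall r g) := by
  have hconv : ConvexOn ℝ Set.univ fun t : EuclideanSpace ℂ (Fin 2) =>
      ‖(g⁻¹ • affineVec t) 2‖ ^ 2 + r * ‖t‖ ^ 2 :=
    ((convexOn_norm_smul_affineVec g⁻¹).pow (fun _ _ => norm_nonneg _) 2).add
      ((convexOn_univ_norm.pow (fun _ _ => norm_nonneg _) 2).smul hr)
  rw [← IsInducing.subtypeVal.isPreconnected_image]
  convert ((convex_ball (0 : EuclideanSpace ℂ (Fin 2)) 1).inter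
    (hconv.convex_lt r)).isPreconnected using 1
  ext t
  simp only [hypBall, coshForm, lorentzSq_affineVec, normSq_eq_norm_sq, Set.mem_image,
    Set.mem_ofPred_eq, Subtype.exists, exists_and_left, exists_prop, exists_eq_right_right,
    Set.mem_inter_iff, Set.mem_univ, true_and, mul_sub, mul_one, lt_sub_iff_add_lt]
  exact and_comm

/-! ### Uniform distortion of the hyperbolic distance functions -/

theorem norm_row_mul_le (g : U21) (t : EuclideanSpace ℂ (Fin 2)) :
    ‖g.1 2 0 * t 0 + g.1 2 1 * t 1‖ ≤ ‖g.1 2 2‖ * ‖t‖ := by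
  refine abs_le_of_sq_le_sq' ?_ (by positivity) |>.2
  have h := normSq_mul_add_mul_le (g.1 2 0) (t 0) (g.1 2 1) (t 1)
  have ht : normSq (t 0) + normSq (t 1) = ‖t‖ ^ 2 := by
    simp [EuclideanSpace.norm_sq_eq, normSq_eq_norm_sq]
  rw [U21.normSq_row, ht, normSq_eq_norm_sq, normSq_eq_norm_sq] at h
  nlinarith [sq_nonneg ‖t‖]

theorem norm_smul_affineVec_sub_le (g : U21) {x y : EuclideanSpace ℂ (Fin 2)} {ε : ℝ} (hε : 0 ≤ ε)
    (hxy : ‖y - x‖ ≤ ε * (1 - ‖x‖)) :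
    ‖(g • affineVec y) 2 - (g • affineVec x) 2‖ ≤ ε * ‖(g • affineVec x) 2‖ := by
  have hsub : (g • affineVec y) 2 - (g • affineVec x) 2 =
      g.1 2 0 * (y - x) 0 + g.1 2 1 * (y - x) 1 := by
    simp only [smul_affineVec_apply_two, PiLp.sub_apply]; ring
  have hx : ‖g.1 2 2‖ * (1 - ‖x‖) ≤ ‖(g • affineVec x) 2‖ := by
    rw [smul_affineVec_apply_two, add_comm _ (g.1 2 2)]
    linarith [norm_row_mul_le g x, norm_sub_le_norm_add (g.1 2 2) (g.1 2 0 * x 0 + g.1 2 1 * x 1)]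
  calc ‖(g • affineVec y) 2 - (g • affineVec x) 2‖
      ≤ ‖g.1 2 2‖ * ‖y - x‖ := hsub ▸ norm_row_mul_le g (y - x)
    _ ≤ ‖g.1 2 2‖ * (ε * (1 - ‖x‖)) := by gcongr
    _ = ε * (‖g.1 2 2‖ * (1 - ‖x‖)) := by ring
    _ ≤ ε * ‖(g • affineVec x) 2‖ := by gcongr

/-- Near `x`, the hyperbolic distances to the images of the origin under *all* of `U21` vary by a
controlled amount. -/
theorem eventually_forall_coshForm_le (x : HypPlane) : ∀ᶠ y : HypPlane in 𝓝 x, ∀ g : U21,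
    coshForm g (affineVec y) * lorentzSq (affineVec x) ≤
      1.04 * (coshForm g (affineVec x) * lorentzSq (affineVec y)) ∧
    coshForm g (affineVec x) * lorentzSq (affineVec y) ≤
      1.04 * (coshForm g (affineVec y) * lorentzSq (affineVec x)) := by
  have hx : 0 < lorentzSq (affineVec x) := lorentzSq_affineVec_pos x
  have hx' : 0 < 1 - ‖x.1‖ := sub_pos.2 (mem_ball_zero_iff.1 x.2)
  have hclose : ∀ᶠ y : HypPlane in 𝓝 x, ‖y.1 - x.1‖ < 0.01 * (1 - ‖x.1‖) :=
    Tendsto.eventually_lt_const (show ‖x.1 - x.1‖ < _ by rw [sub_self, norm_zero]; positivity)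
      (Continuous.tendsto (by fun_prop) x)
  have hcont : Continuous fun y : HypPlane => lorentzSq (affineVec y) := by
    simp only [lorentzSq_affineVec]; fun_prop
  have hlt : ∀ᶠ y : HypPlane in 𝓝 x, lorentzSq (affineVec y) < 1.01 * lorentzSq (affineVec x) :=
    (hcont.tendsto x).eventually_lt_const (by linarith)
  have hgt : ∀ᶠ y : HypPlane in 𝓝 x, 0.99 * lorentzSq (affineVec x) < lorentzSq (affineVec y) :=
    (hcont.tendsto x).eventually_const_lt (by linarith)
  filter_upwards [hclose, hlt, hgt] with y hxy hlt hgt g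
  have h := norm_smul_affineVec_sub_le g⁻¹ (by norm_num) hxy.le
  have hle := norm_sub_norm_le ((g⁻¹ • affineVec y) 2) ((g⁻¹ • affineVec x) 2)
  have hge := norm_sub_norm_le ((g⁻¹ • affineVec x) 2) ((g⁻¹ • affineVec y) 2)
  rw [norm_sub_rev] at hge
  simp only [coshForm, normSq_eq_norm_sq]
  set a := ‖(g⁻¹ • affineVec x) 2‖
  set b := ‖(g⁻¹ • affineVec y) 2‖
  have ha : 0 ≤ a := norm_nonneg _
  have hb : 0 ≤ b := norm_nonneg _
  have hab : a ^ 2 ≤ 1.021 * b ^ 2 := by nlinarith [ha, hb]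
  have hba : b ^ 2 ≤ 1.021 * a ^ 2 := by nlinarith [ha, hb]
  constructor
  · nlinarith [mul_le_mul_of_nonneg_right hba hx.le, mul_le_mul_of_nonneg_left hgt.le (sq_nonneg a)]
  · nlinarith [mul_le_mul_of_nonneg_right hab hx.le, mul_le_mul_of_nonneg_left hlt.le (sq_nonneg a)]

theorem exists_isOpen_forall_hypBall (x : HypPlane) : ∃ W, IsOpen W ∧ x ∈ W ∧ ∀ g : U21,
    (x ∈ hypClosedBall 2 g → W ⊆ hypBall 2.1 g) ∧
      ∀ y ∈ W, y ∈ hypClosedBall 2 g → x ∈ hypBall 2.1 g := by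
  obtain ⟨W, hW, hWo, hxW⟩ := _root_.mem_nhds_iff.1 (eventually_forall_coshForm_le x)
  refine ⟨W, hWo, hxW, fun g => ⟨fun hx y hy => ?_, fun y hy hyg => ?_⟩⟩
  · have h := (hW hy g).1
    have hx : coshForm g (affineVec x) ≤ 2 * lorentzSq (affineVec x) := hx
    refine lt_of_mul_lt_mul_right (h.trans_lt ?_) (lorentzSq_affineVec_pos x).le
    nlinarith [mul_pos (lorentzSq_affineVec_pos x) (lorentzSq_affineVec_pos y),
      lorentzSq_affineVec_pos y]
  · have h := (hW hy g).2
    have hyg : coshForm g (affineVec y) ≤ 2 * lorentzSq (affineVec y) := hyg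
    refine lt_of_mul_lt_mul_right (h.trans_lt ?_) (lorentzSq_affineVec_pos y).le
    nlinarith [mul_pos (lorentzSq_affineVec_pos x) (lorentzSq_affineVec_pos y),
      lorentzSq_affineVec_pos x]

end

/-! ### The action on the complex hyperbolic plane -/

section

open Matrix Complex ComplexConjugate
open scoped Matrix.Module

/-- The representation of words by matrices over `ℤ[ζ]`. -/
def integralRep : FreeGroup CSgen →* GL (Fin 3) CycInt :=
  FreeGroup.lift fun
    | .u => Units.ofPowEqOne matU 3 matU_pow_three (by norm_num)
    | .v => Units.ofPowEqOne matV 4 matV_pow_four (by norm_num)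
    | .b => Units.ofPowEqOne matB 3 matB_pow_three (by norm_num)

/-- The square root of `1 + √3`. -/
noncomputable def scale : ℝ := √(1 + √3)

theorem scale_pos : 0 < scale := Real.sqrt_pos.2 (by positivity)

theorem scale_mul_scale : scale * scale = 1 + √3 := Real.mul_self_sqrt (by positivity)

theorem ofReal_scale_mul_scale : (scale : ℂ) * scale = 1 + √3 := by exact_mod_cast scale_mul_scale

theorem ofReal_scale_ne_zero : (scale : ℂ) ≠ 0 := by exact_mod_cast scale_pos.ne'

theorem ofReal_scale_eq : (scale : ℂ) = (scale : ℂ)⁻¹ * (1 + √3) := by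
  rw [eq_inv_mul_iff_mul_eq₀ ofReal_scale_ne_zero, ofReal_scale_mul_scale]

theorem ofReal_sqrt_three_mul_self : (√3 : ℂ) * √3 = 3 := by
  exact_mod_cast Real.mul_self_sqrt (show (0 : ℝ) ≤ 3 by norm_num)

theorem I_eq_two_mul_zeta_sub : I = 2 * CycInt.zeta - √3 := by
  apply Complex.ext <;> simp [CycInt.zeta]
  ring

/-- The passage to coordinates in which the invariant Hermitian form of the matrices is
`lorentzForm`. -/
noncomputable def basisChange : GL (Fin 3) ℂ :=
  GeneralLinearGroup.mkOfDetNeZero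
    !![(scale : ℂ), -(scale : ℂ)⁻¹, 0; 0, (scale : ℂ)⁻¹ * I, 0; 0, 0, 1]
    (by simp [det_fin_three, scale_pos.ne'])

/-- The embedding of matrices over `ℤ[ζ]` into complex matrices, in the new coordinates. -/
noncomputable def toUnitary : GL (Fin 3) CycInt →* GL (Fin 3) ℂ :=
  (MulAut.conj basisChange).toMonoidHom.comp (GeneralLinearGroup.map CycInt.toComplex)

theorem toUnitary_mul_basisChange (g : GL (Fin 3) CycInt) :
    toUnitary g * basisChange = basisChange * GeneralLinearGroup.map CycInt.toComplex g := by
  simp [toUnitary]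

theorem toUnitary_apply_two_two (g : GL (Fin 3) CycInt) :
    (toUnitary g).1 2 2 = CycInt.toComplex (g.1 2 2) := by
  have h := congrArg (fun M : GL (Fin 3) ℂ => M.1 2 2) (toUnitary_mul_basisChange g)
  simpa [basisChange, mul_apply, Fin.sum_univ_three] using h

theorem trace_toUnitary (g : GL (Fin 3) CycInt) :
    (toUnitary g).1.trace = CycInt.toComplex g.1.trace := by
  have h : (toUnitary g).1 = basisChange.1 * g.1.map CycInt.toComplex * basisChange⁻¹.1 := rfl
  rw [h, trace_mul_cycle, Units.inv_mul, one_mul]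
  exact (AddMonoidHom.map_trace CycInt.toComplex.toAddMonoidHom g.1).symm

theorem det_toUnitary (g : GL (Fin 3) CycInt) :
    (toUnitary g).1.det = CycInt.toComplex g.1.det := by
  have h : (toUnitary g).1 = basisChange.1 * g.1.map CycInt.toComplex * basisChange⁻¹.1 := rfl
  rw [h, det_units_conj]
  exact (RingHom.map_det CycInt.toComplex g.1).symm

theorem toUnitary_eq_of_mul_eq {g : GL (Fin 3) CycInt} {M : Matrix (Fin 3) (Fin 3) ℂ}
    (h : M * basisChange.1 = basisChange.1 * g.1.map CycInt.toComplex) : (toUnitary g).1 = M := by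
  have hg := congrArg Units.val (toUnitary_mul_basisChange g)
  exact (Units.isUnit basisChange).mul_right_cancel (hg.trans h.symm)

/-- The square root `exp(πi/12) / √2` of `ζ / 2`. -/
noncomputable def sqrtHalfZeta : ℂ := ⟨(√3 + 1) / 4, (√3 - 1) / 4⟩

theorem normSq_sqrtHalfZeta : normSq sqrtHalfZeta = 1 / 2 := by
  have h := Real.mul_self_sqrt (show (0 : ℝ) ≤ 3 by norm_num)
  rw [normSq_apply, sqrtHalfZeta]
  linear_combination h / 8

theorem two_mul_sqrtHalfZeta_sq : 2 * sqrtHalfZeta ^ 2 = CycInt.zeta := by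
  have h := Real.mul_self_sqrt (show (0 : ℝ) ≤ 3 by norm_num)
  apply Complex.ext <;> simp [sqrtHalfZeta, CycInt.zeta, pow_two] <;> linarith

theorem sqrtHalfZeta_mul_scale : sqrtHalfZeta * scale = (scale : ℂ)⁻¹ * (1 + CycInt.zeta) := by
  have h := Real.mul_self_sqrt (show (0 : ℝ) ≤ 3 by norm_num)
  have hmul : sqrtHalfZeta * (1 + √3) = 1 + CycInt.zeta := by
    apply Complex.ext <;> simp [sqrtHalfZeta, CycInt.zeta] <;> linarith
  rw [eq_inv_mul_iff_mul_eq₀ ofReal_scale_ne_zero, ← hmul]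
  linear_combination sqrtHalfZeta * ofReal_scale_mul_scale

theorem sqrtHalfZeta_mul_I_sub_one : sqrtHalfZeta * (I - 1) = CycInt.zeta - √3 := by
  apply Complex.ext <;> simp [sqrtHalfZeta, CycInt.zeta] <;> ring

theorem toUnitary_integralRep_u : (toUnitary (integralRep (.of .u))).1 =
    !![sqrtHalfZeta, sqrtHalfZeta, 0; -I * sqrtHalfZeta, I * sqrtHalfZeta, 0; 0, 0, 1] := by
  have hI : I * (√3 * CycInt.zeta - 1) = CycInt.zeta - √3 := by
    rw [I_eq_two_mul_zeta_sub]
    linear_combination 2 * (√3 : ℂ) * CycInt.zeta_mul_zeta +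
      CycInt.zeta * ofReal_sqrt_three_mul_self
  refine toUnitary_eq_of_mul_eq ?_
  ext i k
  fin_cases i <;> fin_cases k <;>
    simp [basisChange, mul_apply, Fin.sum_univ_three, integralRep, matU, CycInt.toComplex_mk]
  · linear_combination sqrtHalfZeta_mul_scale
  · linear_combination (scale : ℂ)⁻¹ * sqrtHalfZeta_mul_I_sub_one +
      (1 - CycInt.zeta) * ofReal_scale_eq
  · linear_combination -I * sqrtHalfZeta_mul_scale
  · linear_combination (scale : ℂ)⁻¹ * (sqrtHalfZeta_mul_I_sub_one - hI + sqrtHalfZeta * I_mul_I)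

theorem toUnitary_integralRep_v : (toUnitary (integralRep (.of .v))).1 =
    !![1, 0, 0; 0, I, 0; 0, 0, 1] := by
  refine toUnitary_eq_of_mul_eq ?_
  ext i k
  fin_cases i <;> fin_cases k <;>
    simp [basisChange, mul_apply, Fin.sum_univ_three, integralRep, matV, CycInt.toComplex_mk]
  · linear_combination (1 - (√3 - 1) * CycInt.zeta) * ofReal_scale_eq -
      (scale : ℂ)⁻¹ * CycInt.zeta * ofReal_sqrt_three_mul_self
  · linear_combination (scale : ℂ)⁻¹ * I * I_eq_two_mul_zeta_sub

theorem toUnitary_integralRep_b : (toUnitary (integralRep (.of .b))).1 =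
    !![1 - (1 + √3) * conj CycInt.zeta, 0, scale * conj CycInt.zeta; 0, 1, 0;
      -scale * conj CycInt.zeta, 0, 1 + conj CycInt.zeta] := by
  refine toUnitary_eq_of_mul_eq ?_
  ext i k
  fin_cases i <;> fin_cases k <;>
    simp [basisChange, mul_apply, Fin.sum_univ_three, integralRep, matB, CycInt.toComplex_mk,
      CycInt.conj_zeta, -mul_eq_mul_left_iff]
  · linear_combination -(scale : ℂ) * ofReal_sqrt_three_mul_self
  · linear_combination (CycInt.zeta - √3) * ofReal_scale_eq
  · ring
  · linear_combination (CycInt.zeta - √3) * ofReal_scale_mul_scale - ofReal_sqrt_three_mul_self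
  · linear_combination (√3 - CycInt.zeta) * mul_inv_cancel₀ ofReal_scale_ne_zero
  · ring

theorem smul_u (z : Fin 3 → ℂ) : toUnitary (integralRep (.of .u)) • z =
    ![sqrtHalfZeta * (z 0 + z 1), I * sqrtHalfZeta * (z 1 - z 0), z 2] := by
  change (toUnitary (integralRep (.of .u))).1 *ᵥ z = _
  rw [toUnitary_integralRep_u]
  ext i
  fin_cases i <;> simp [mulVec, dotProduct, Fin.sum_univ_three] <;> ring

theorem smul_v (z : Fin 3 → ℂ) : toUnitary (integralRep (.of .v)) • z = ![z 0, I * z 1, z 2] := by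
  change (toUnitary (integralRep (.of .v))).1 *ᵥ z = _
  rw [toUnitary_integralRep_v]
  ext i
  fin_cases i <;> simp [mulVec, dotProduct, Fin.sum_univ_three]

/-- The vector orthogonal to the complex line fixed by `b`. -/
noncomputable def mirrorNormal : Fin 3 → ℂ := ![scale, 0, 1]

theorem lorentzForm_mirrorNormal_self : lorentzForm mirrorNormal mirrorNormal = -√3 := by
  simp [lorentzForm_apply, mirrorNormal, ofReal_scale_mul_scale]

theorem smul_b (z : Fin 3 → ℂ) : toUnitary (integralRep (.of .b)) • z =
    z + (conj CycInt.zeta * lorentzForm mirrorNormal z) • mirrorNormal := by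
  change (toUnitary (integralRep (.of .b))).1 *ᵥ z = _
  rw [toUnitary_integralRep_b]
  ext i
  fin_cases i <;> simp [mulVec, dotProduct, Fin.sum_univ_three, lorentzForm_apply, mirrorNormal]
  · linear_combination z 0 * conj CycInt.zeta * ofReal_scale_mul_scale
  · ring

theorem conj_lorentzForm (z w : Fin 3 → ℂ) : conj (lorentzForm z w) = lorentzForm w z := by
  simp only [lorentzForm_apply, map_sub, map_mul, conj_conj]; ring

theorem toUnitary_integralRep_of_mem (x : CSgen) : toUnitary (integralRep (.of x)) ∈ U21 := by
  intro z w
  cases x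
  · have h : conj sqrtHalfZeta * sqrtHalfZeta = 1 / 2 := by
      rw [← normSq_eq_conj_mul_self, normSq_sqrtHalfZeta]; norm_num
    simp only [smul_u, lorentzForm_apply, cons_val, map_mul, map_add, map_sub, conj_I]
    linear_combination (conj (z 1) - conj (z 0)) * (w 1 - w 0) *
      (conj sqrtHalfZeta * sqrtHalfZeta) * I_mul_I - 2 * (conj (z 0) * w 0 + conj (z 1) * w 1) * h
  · simp only [smul_v, lorentzForm_apply, cons_val, map_mul, conj_I]
    linear_combination conj (z 1) * w 1 * I_mul_I
  · simp only [smul_b, map_add, map_smul, LinearMap.add_apply, LinearMap.smul_apply, smul_eq_mul,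
      map_smulₛₗ, map_mul, conj_lorentzForm, lorentzForm_mirrorNormal_self, conj_conj]
    rw [CycInt.conj_zeta]
    linear_combination √3 * lorentzForm z mirrorNormal * lorentzForm mirrorNormal w *
      CycInt.zeta_mul_zeta

/-- The unitary representation of words. -/
noncomputable def unitaryRep : FreeGroup CSgen →* U21 :=
  FreeGroup.lift fun x => ⟨toUnitary (integralRep (.of x)), toUnitary_integralRep_of_mem x⟩

theorem coe_unitaryRep (w : FreeGroup CSgen) :
    (unitaryRep w : GL (Fin 3) ℂ) = toUnitary (integralRep w) := by
  have h : U21.subtype.comp unitaryRep = toUnitary.comp integralRep := by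
    ext x; simp [unitaryRep]
  exact DFunLike.congr_fun h w

/-! ### Moving points towards the centre -/

theorem unitaryRep_smul (w : FreeGroup CSgen) (z : Fin 3 → ℂ) :
    unitaryRep w • z = toUnitary (integralRep w) • z :=
  congrArg (· • z) (coe_unitaryRep w)

/-- The subgroup of words in `u` and `v`, which fix the centre. -/
def stabWords : Subgroup (FreeGroup CSgen) := Subgroup.closure {.of .u, .of .v}

theorem of_u_mem_stabWords : .of .u ∈ stabWords := Subgroup.subset_closure (Or.inl rfl)

theorem of_v_mem_stabWords : .of .v ∈ stabWords := Subgroup.subset_closure (Or.inr rfl)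

theorem mk_mem_range_val_of_mem_stabWords {k : FreeGroup CSgen} (hk : k ∈ stabWords) :
    PresentedGroup.mk csRels k ∈ Set.range NormalForm.val := by
  induction hk using Subgroup.closure_induction with
  | mem x hx =>
    obtain rfl | rfl := hx
    · exact ⟨NormalForm.guMul 1, by rw [NormalForm.val_guMul, NormalForm.val_one, mul_one]; rfl⟩
    · exact ⟨NormalForm.gvMul 1, by rw [NormalForm.val_gvMul, NormalForm.val_one, mul_one]; rfl⟩
  | one => exact ⟨1, by rw [NormalForm.val_one, map_one]⟩
  | mul k k' _ _ hk hk' =>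
    obtain ⟨⟨x, hx⟩, ⟨y, hy⟩⟩ := And.intro hk hk'
    exact ⟨x * y, by rw [NormalForm.val_mul, hx, hy, map_mul]⟩
  | inv k _ hk =>
    obtain ⟨x, hx⟩ := hk
    exact ⟨x⁻¹, by rw [NormalForm.val_inv, hx, map_inv]⟩

theorem smul_apply_two_of_mem_stabWords {k : FreeGroup CSgen} (hk : k ∈ stabWords)
    (z : Fin 3 → ℂ) : (unitaryRep k • z) 2 = z 2 := by
  induction hk using Subgroup.closure_induction generalizing z with
  | mem x hx =>
    obtain rfl | rfl := hx
    · rw [unitaryRep_smul, smul_u]; rfl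
    · rw [unitaryRep_smul, smul_v]; rfl
  | one => rw [map_one, one_smul]
  | mul k k' _ _ hk hk' => rw [map_mul, mul_smul, hk, hk']
  | inv k _ hk => rw [map_inv, ← hk ((unitaryRep k)⁻¹ • z), smul_inv_smul]

theorem smul_origin_of_mem_stabWords {k : FreeGroup CSgen} (hk : k ∈ stabWords) :
    unitaryRep k • origin = origin := by
  induction hk using Subgroup.closure_induction with
  | mem x hx =>
    obtain rfl | rfl := hx
    · rw [unitaryRep_smul, smul_u]; ext i; fin_cases i <;> simp [origin]
    · rw [unitaryRep_smul, smul_v]; ext i; fin_cases i <;> simp [origin]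
  | one => rw [map_one, one_smul]
  | mul k k' _ _ hk hk' => rw [map_mul, mul_smul, hk', hk]
  | inv k _ hk => rw [map_inv, inv_smul_eq_iff, hk]

theorem unitaryRep_mul_mul_apply_two_two {x y : FreeGroup CSgen} (hx : x ∈ stabWords)
    (hy : y ∈ stabWords) (w : FreeGroup CSgen) :
    (unitaryRep (x * w * y)).1 2 2 = (unitaryRep w).1 2 2 := by
  rw [← U21.smul_origin_apply, map_mul, map_mul, mul_smul, mul_smul,
    smul_origin_of_mem_stabWords hy, smul_apply_two_of_mem_stabWords hx, U21.smul_origin_apply]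

/-- The word `(uv)²`, which lifts `gj`. -/
def jWord : FreeGroup CSgen := (.of .u * .of .v) ^ 2

theorem jWord_mem_stabWords : jWord ∈ stabWords :=
  pow_mem (mul_mem of_u_mem_stabWords of_v_mem_stabWords) 2

theorem smul_jWord (z : Fin 3 → ℂ) :
    unitaryRep jWord • z = ![CycInt.zeta * z 0, CycInt.zeta * z 1, z 2] := by
  simp only [jWord, pow_two, map_mul, mul_smul, unitaryRep_smul, smul_u, smul_v, cons_val,
    ← two_mul_sqrtHalfZeta_sq]
  ext i
  fin_cases i
  · simp only [Fin.zero_eta, cons_val_zero]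
    linear_combination sqrtHalfZeta ^ 2 * (z 1 * I - z 0) * I_mul_I
  · simp only [Fin.mk_one, cons_val_one, cons_val_zero]
    linear_combination sqrtHalfZeta ^ 2 * (I * (I * z 1 - z 0) - 2 * z 1) * I_mul_I
  · rfl

theorem zeta_ne_zero : CycInt.zeta ≠ 0 := fun h => by
  simpa [CycInt.zeta] using congrArg Complex.im h

theorem smul_jWord_zpow_apply_zero (n : ℤ) (z : Fin 3 → ℂ) :
    (unitaryRep (jWord ^ n) • z) 0 = CycInt.zeta ^ n * z 0 := by
  induction n using Int.induction_on generalizing z with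
  | zero => simp
  | succ n ih =>
    rw [_root_.zpow_add_one, map_mul, mul_smul, ih, smul_jWord, zpow_add_one₀ zeta_ne_zero]
    simp [mul_assoc]
  | pred n ih =>
    have h := smul_jWord ((unitaryRep jWord)⁻¹ • z)
    rw [smul_inv_smul] at h
    rw [_root_.zpow_sub_one, map_mul, mul_smul, ih, map_inv, zpow_sub_one₀ zeta_ne_zero, mul_assoc]
    nth_rewrite 2 [h]
    simp [zeta_ne_zero]

theorem zeta_eq_exp : CycInt.zeta = exp ((Real.pi / 6 : ℝ) * I) := by
  apply Complex.ext
  · rw [exp_ofReal_mul_I_re, Real.cos_pi_div_six]; rfl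
  · rw [exp_ofReal_mul_I_im, Real.sin_pi_div_six]; rfl

theorem norm_zeta : ‖CycInt.zeta‖ = 1 := by rw [zeta_eq_exp, norm_exp_ofReal_mul_I]

theorem normSq_zeta : normSq CycInt.zeta = 1 := by rw [normSq_eq_norm_sq, norm_zeta, one_pow]

theorem exists_cos_mul_norm_le_re_zeta_zpow_mul (p : ℂ) :
    ∃ n : ℤ, Real.cos (Real.pi / 12) * ‖p‖ ≤ (CycInt.zeta ^ n * p).re := by
  have hpi := Real.pi_pos
  set m : ℤ := round (p.arg / (Real.pi / 6))
  have hm : |p.arg - m * (Real.pi / 6)| ≤ Real.pi / 12 := by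
    have h : |p.arg / (Real.pi / 6) - m| ≤ 1 / 2 := abs_sub_round _
    rw [show p.arg - m * (Real.pi / 6) = (p.arg / (Real.pi / 6) - m) * (Real.pi / 6) by field_simp,
      abs_mul, abs_of_pos (show 0 < Real.pi / 6 by positivity)]
    nlinarith
  have hrot : CycInt.zeta ^ (-m) * p = (‖p‖ : ℝ) * exp ((p.arg - m * (Real.pi / 6) : ℝ) * I) := by
    nth_rewrite 1 [zeta_eq_exp, ← norm_mul_exp_arg_mul_I p]
    rw [← exp_int_mul, mul_left_comm, ← exp_add]
    congr 2; push_cast; ring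
  refine ⟨-m, ?_⟩
  rw [hrot, re_ofReal_mul, exp_ofReal_mul_I_re, mul_comm, ← Real.cos_abs (_ - _)]
  exact mul_le_mul_of_nonneg_left
    (Real.cos_le_cos_of_nonneg_of_le_pi (abs_nonneg _) (by linarith) hm) (norm_nonneg p)

theorem two_mul_cos_pi_div_twelve_sq : 2 * Real.cos (Real.pi / 12) ^ 2 = 1 + √3 / 2 := by
  rw [Real.cos_sq, show 2 * (Real.pi / 12) = Real.pi / 6 by ring, Real.cos_pi_div_six]; ring

theorem norm_one_add_zeta : ‖1 + CycInt.zeta‖ = 2 * Real.cos (Real.pi / 12) := by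
  have hcos : 0 ≤ Real.cos (Real.pi / 12) := Real.cos_nonneg_of_neg_pi_div_two_le_of_le
    (by linarith [Real.pi_pos]) (by linarith [Real.pi_pos])
  have h := Real.mul_self_sqrt (show (0 : ℝ) ≤ 3 by norm_num)
  rw [← sq_eq_sq₀ (norm_nonneg _) (by positivity), ← normSq_eq_norm_sq, mul_pow, normSq_apply]
  simp only [CycInt.zeta, add_re, add_im, one_re, one_im]
  linear_combination h / 4 - 2 * two_mul_cos_pi_div_twelve_sq

theorem sqrt_mul_le_abs_of_sq_add_sq_add_sq_eq {x y w r : ℝ} (hr : 0 ≤ r)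
    (h : x ^ 2 + y ^ 2 + w ^ 2 = r ^ 2) :
    √3 / 3 * r ≤ |x| ∨ √3 / 3 * r ≤ |y| ∨ √3 / 3 * r ≤ |w| := by
  have hsqrt : (√3 / 3 * r) ^ 2 = r ^ 2 / 3 := by
    rw [mul_pow, div_pow, Real.sq_sqrt (by norm_num)]; ring
  have hsq {t : ℝ} (ht : |t| < √3 / 3 * r) : t ^ 2 < r ^ 2 / 3 := by
    rw [← hsqrt]
    exact sq_lt_sq.2 (by rwa [abs_of_nonneg (by positivity : 0 ≤ √3 / 3 * r)])
  by_contra! hlt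
  linarith [hsq hlt.1, hsq hlt.2.1, hsq hlt.2.2]

theorem smul_of_u_mul_of_v_pow_apply_zero (n : ℕ) (z : Fin 3 → ℂ) :
    (unitaryRep (.of .u * .of .v ^ n) • z) 0 = sqrtHalfZeta * (z 0 + I ^ n * z 1) := by
  have hv (n : ℕ) : (unitaryRep (.of .v ^ n) • z) = ![z 0, I ^ n * z 1, z 2] := by
    induction n with
    | zero => ext i; fin_cases i <;> simp
    | succ n ih =>
      rw [pow_succ', map_mul, mul_smul, ih, unitaryRep_smul, smul_v]
      simp [pow_succ', mul_assoc]
  rw [map_mul, mul_smul, hv, unitaryRep_smul, smul_u]; rfl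

theorem exists_mem_stabWords_le_normSq_smul_apply_zero (z : Fin 3 → ℂ) : ∃ k ∈ stabWords,
    (3 + √3) / 6 * (normSq (z 0) + normSq (z 1)) ≤ normSq ((unitaryRep k • z) 0) := by
  set r := normSq (z 0) + normSq (z 1) with hr
  have hsphere : (normSq (z 0) - normSq (z 1)) ^ 2 + (2 * (z 0 * conj (z 1)).re) ^ 2 +
      (2 * (z 0 * conj (z 1)).im) ^ 2 = r ^ 2 := by
    simp only [hr, normSq_apply, mul_re, mul_im, conj_re, conj_im]; ring
  have huv (n : ℕ) : normSq ((unitaryRep (.of .u * .of .v ^ n) • z) 0) =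
      r / 2 + (z 0 * conj (I ^ n * z 1)).re := by
    rw [smul_of_u_mul_of_v_pow_apply_zero, normSq_mul, normSq_sqrtHalfZeta, normSq_add, normSq_mul,
      map_pow, normSq_I, one_pow, hr]
    ring
  have huv_mem (n : ℕ) : .of .u * .of .v ^ n ∈ stabWords :=
    mul_mem of_u_mem_stabWords (pow_mem of_v_mem_stabWords n)
  have huvu : normSq ((unitaryRep (.of .u * .of .v ^ 3 * .of .u) • z) 0) = normSq (z 1) := by
    rw [map_mul, mul_smul, smul_of_u_mul_of_v_pow_apply_zero, unitaryRep_smul, smul_u,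
      ← one_mul (normSq (z 1)), ← normSq_zeta, ← normSq_mul, ← two_mul_sqrtHalfZeta_sq]
    congr 1
    simp only [cons_val, I_pow_three]
    linear_combination sqrtHalfZeta ^ 2 * (z 0 - z 1) * I_mul_I
  have hr₀ : 0 ≤ r := add_nonneg (normSq_nonneg _) (normSq_nonneg _)
  rcases sqrt_mul_le_abs_of_sq_add_sq_add_sq_eq hr₀ hsphere with h | h | h <;>
    rcases le_abs.1 h with h | h
  · exact ⟨1, one_mem _, by rw [map_one, one_smul]; linarith⟩
  · exact ⟨_, mul_mem (huv_mem 3) of_u_mem_stabWords, by rw [huvu]; linarith⟩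
  · refine ⟨_, huv_mem 0, ?_⟩
    rw [huv, pow_zero, one_mul]; linarith
  · refine ⟨_, huv_mem 2, ?_⟩
    have hre : (z 0 * conj (I ^ 2 * z 1)).re = -(z 0 * conj (z 1)).re := by simp [I_sq]
    rw [huv, hre]; linarith
  · refine ⟨_, huv_mem 1, ?_⟩
    have hre : (z 0 * conj (I ^ 1 * z 1)).re = (z 0 * conj (z 1)).im := by
      simp [neg_add_eq_sub]
    rw [huv, hre]; linarith
  · refine ⟨_, huv_mem 3, ?_⟩
    have hre : (z 0 * conj (I ^ 3 * z 1)).re = -(z 0 * conj (z 1)).im := by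
      simp [I_pow_three, neg_add_eq_sub]
    rw [huv, hre]; linarith

theorem smul_of_b_inv_apply_two (z : Fin 3 → ℂ) :
    (unitaryRep (.of .b)⁻¹ • z) 2 =
      -CycInt.zeta * (scale * z 0 - (1 + conj CycInt.zeta) * z 2) := by
  have hinv : unitaryRep (.of .b)⁻¹ • z =
      z + (CycInt.zeta * lorentzForm mirrorNormal z) • mirrorNormal := by
    rw [map_inv, inv_smul_eq_iff, unitaryRep_smul, smul_b]
    simp only [map_add, map_smul, smul_eq_mul, lorentzForm_mirrorNormal_self, CycInt.conj_zeta,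
      add_assoc, left_eq_add, ← add_smul]
    rw [smul_eq_zero]
    left
    linear_combination √3 * lorentzForm mirrorNormal z * CycInt.zeta_mul_zeta
  rw [hinv, CycInt.conj_zeta]
  simp [lorentzForm_apply, mirrorNormal]
  linear_combination z 2 * CycInt.zeta_mul_zeta

theorem exists_zpow_normSq_smul_apply_two_le (z : Fin 3 → ℂ) (hz : z 2 = 1) :
    ∃ n : ℤ, normSq ((unitaryRep ((.of .b)⁻¹ * jWord ^ n) • z) 2) ≤
      (scale * ‖z 0‖) ^ 2 - (2 + √3) * (scale * ‖z 0‖) + (2 + √3) := by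
  obtain ⟨n, hn⟩ := exists_cos_mul_norm_le_re_zeta_zpow_mul (z 0 * (1 + CycInt.zeta))
  set p := CycInt.zeta ^ n * z 0 with hp
  have hnorm : ‖p‖ = ‖z 0‖ := by rw [hp, norm_mul, norm_zpow, norm_zeta, _root_.one_zpow, one_mul]
  have hre : (2 + √3) * ‖p‖ ≤ 2 * (p * (1 + CycInt.zeta)).re := by
    rw [norm_mul, norm_one_add_zeta, ← mul_assoc (_ ^ n), ← hp, ← hnorm] at hn
    linear_combination 2 * hn - 2 * ‖p‖ * two_mul_cos_pi_div_twelve_sq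
  have hval : normSq ((unitaryRep ((.of .b)⁻¹ * jWord ^ n) • z) 2) =
      (scale * ‖p‖) ^ 2 - scale * (2 * (p * (1 + CycInt.zeta)).re) + (2 + √3) := by
    rw [map_mul, mul_smul, smul_of_b_inv_apply_two, smul_jWord_zpow_apply_zero,
      smul_apply_two_of_mem_stabWords (zpow_mem jWord_mem_stabWords n), hz, mul_one, normSq_mul,
      normSq_neg, normSq_zeta, one_mul, ← hp, normSq_sub]
    have h : normSq (1 + conj CycInt.zeta) = 2 + √3 := by
      rw [normSq_add, normSq_conj, normSq_zeta, conj_conj, normSq_one, one_mul, CycInt.zeta]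
      ring
    rw [h, normSq_mul, normSq_ofReal, mul_pow, ← normSq_eq_norm_sq]
    simp only [map_add, map_one, RingHomCompTriple.comp_apply, RingHom.id_apply, mul_re, ofReal_re,
      ofReal_im, zero_mul, sub_zero, add_re, one_re, mul_im, add_zero, add_im, one_im, zero_add]
    ring
  refine ⟨n, ?_⟩
  rw [hval, ← hnorm]
  linarith [mul_le_mul_of_nonneg_left hre scale_pos.le]

theorem exists_normSq_smul_apply_two_le (z : Fin 3 → ℂ) (hz : z 2 = 1) :
    ∃ k ∈ stabWords, ∃ y : Fin 3 → ℂ,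
      (3 + √3) / 6 * (1 - lorentzSq z) ≤ normSq (y 0) ∧ normSq (y 0) ≤ 1 - lorentzSq z ∧
      normSq ((unitaryRep ((.of .b)⁻¹ * k) • z) 2) ≤
        (scale * ‖y 0‖) ^ 2 - (2 + √3) * (scale * ‖y 0‖) + (2 + √3) := by
  obtain ⟨k, hk, hk₀⟩ := exists_mem_stabWords_le_normSq_smul_apply_zero z
  have hk₂ := (smul_apply_two_of_mem_stabWords hk z).trans hz
  have hlorentz := U21.lorentzSq_smul (unitaryRep k) z
  obtain ⟨n, hn⟩ := exists_zpow_normSq_smul_apply_two_le (unitaryRep k • z) hk₂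
  refine ⟨jWord ^ n * k, mul_mem (zpow_mem jWord_mem_stabWords n) hk, unitaryRep k • z, ?_, ?_, ?_⟩
  · simpa [lorentzSq, hz, sub_sub] using hk₀
  · rw [← hlorentz, lorentzSq, hk₂, normSq_one]
    linarith [normSq_nonneg ((unitaryRep k • z) 1)]
  · rwa [← mul_assoc, map_mul, mul_smul]

theorem sqrt_three_bounds : 1.73205 < √3 ∧ √3 < 1.73206 :=
  ⟨Real.lt_sqrt_of_sq_lt (by norm_num), (Real.sqrt_lt' (by norm_num)).2 (by norm_num)⟩

theorem sq_sub_mul_add_le_of_sq_mem_Icc {σ : ℝ} (h₀ : 0 ≤ σ) (h : σ ^ 2 ∈ Set.Icc 1.077 1.4311) :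
    σ ^ 2 - (2 + √3) * σ + (2 + √3) ≤ 0.94 := by
  obtain ⟨hl, hu⟩ := h
  have hσl : 1.0377 ≤ σ := by nlinarith
  have hσu : σ ≤ 1.2 := by nlinarith
  nlinarith [mul_nonneg (sub_nonneg.2 hσl) (sub_nonneg.2 hσu), sqrt_three_bounds.1]

/-- If the squared hyperbolic cosine of the distance of a point to the centre is less than `2.1`,
then it is at most `2` for the distance to a neighbouring translate of the centre. -/
theorem exists_coshForm_le_two_mul {z : Fin 3 → ℂ} (hz : z 2 = 1)
    (h : normSq (z 2) < 2.1 * lorentzSq z) :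
    ∃ g : FreeGroup CSgen, PresentedGroup.mk csRels g ∈ Set.range CosetWord.val ∧
      coshForm (unitaryRep g) z ≤ 2 * lorentzSq z := by
  by_cases hfar : normSq (z 2) ≤ 2 * lorentzSq z
  · exact ⟨1, one_mem_range_val, by rwa [map_one, coshForm_one]⟩
  obtain ⟨k, hk, y, hlow, hup, hle⟩ := exists_normSq_smul_apply_two_le z hz
  refine ⟨k⁻¹ * .of .b, ?_, ?_⟩
  · rw [map_mul, ← mul_one (_ * _)]
    exact mul_midRep_mul_mem_range_val (mk_mem_range_val_of_mem_stabWords (inv_mem hk))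
      ⟨1, NormalForm.val_one⟩ 1
  rw [coshForm, ← map_inv, _root_.mul_inv_rev, inv_inv]
  rw [hz, normSq_one] at h hfar
  obtain ⟨hs, hs'⟩ := sqrt_three_bounds
  have hσ : (scale * ‖y 0‖) ^ 2 = (1 + √3) * normSq (y 0) := by
    rw [mul_pow, pow_two scale, scale_mul_scale, normSq_eq_norm_sq]
  have hmem : (scale * ‖y 0‖) ^ 2 ∈ Set.Icc 1.077 1.4311 := by
    rw [hσ]
    constructor <;> nlinarith
  linarith [sq_sub_mul_add_le_of_sq_mem_Icc (mul_nonneg scale_pos.le (norm_nonneg (y 0))) hmem]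

end

/-! ### Short products -/

section

open Matrix Complex
open scoped Matrix.Module

/-- The representation of words by matrices over `ℤ[ζ]`, forgetting invertibility. -/
def matRep : FreeGroup CSgen →* Matrix (Fin 3) (Fin 3) CycInt :=
  (Units.coeHom _).comp integralRep

theorem matRep_u : matRep (.of .u) = matU := by simp [matRep, integralRep]

theorem matRep_v : matRep (.of .v) = matV := by simp [matRep, integralRep]

theorem matRep_b : matRep (.of .b) = matB := by simp [matRep, integralRep]

theorem matRep_mem_range_scalar {w : FreeGroup CSgen} (hw : PresentedGroup.mk csRels w = 1) :
    matRep w ∈ Set.range (scalar (Fin 3)) := by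
  have hrels : csRels ⊆ (Subgroup.center (GL (Fin 3) CycInt)).comap integralRep := by
    have hcenter {r : FreeGroup CSgen} (h : matRep r ∈ Set.range (scalar (Fin 3))) :
        r ∈ (Subgroup.center (GL (Fin 3) CycInt)).comap integralRep :=
      GeneralLinearGroup.mem_center_iff_val_mem_range_scalar.2 h
    have hquot {r s : FreeGroup CSgen} (h : matRep r = matRep s) :
        r * s⁻¹ ∈ (Subgroup.center (GL (Fin 3) CycInt)).comap integralRep := by
      rw [Subgroup.mem_comap, map_mul, map_inv, Units.ext h, mul_inv_cancel]
      exact one_mem _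
    rintro r (rfl | rfl | rfl | rfl | rfl | rfl | rfl)
    · exact hcenter ⟨1, by rw [map_pow, matRep_u, matU_pow_three, map_one]⟩
    · exact hcenter ⟨1, by rw [map_pow, matRep_v, matV_pow_four, map_one]⟩
    · exact hcenter ⟨1, by rw [map_pow, matRep_b, matB_pow_three, map_one]⟩
    · exact hquot (by simp only [map_pow, map_mul, matRep_u, matRep_v, matU_mul_matV_sq,
        matV_mul_matU_sq])
    · exact hquot (by simp only [map_mul, matRep_v, matRep_b, matV_mul_matB])
    · exact hcenter ⟨star QuadraticAlgebra.omega, by rw [map_pow, map_mul, map_mul,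
        matRep_u, matRep_v, matRep_b, matB_mul_matU_mul_matV_pow_three]⟩
    · exact hcenter ⟨star QuadraticAlgebra.omega, by rw [map_mul, map_pow, map_mul, map_mul,
        map_mul, matRep_u, matRep_v, matRep_b, matB_mul_matU_mul_matV_mul_matU_sq_mul_matV]⟩
  exact GeneralLinearGroup.mem_center_iff_val_mem_range_scalar.1
    (Subgroup.normalClosure_le_normal hrels (PresentedGroup.mk_eq_one_iff.1 hw))

theorem exists_normSq_eq_one_and_smul_eq {w : FreeGroup CSgen}
    (hw : PresentedGroup.mk csRels w = 1) :
    ∃ c : ℂ, normSq c = 1 ∧ ∀ z : Fin 3 → ℂ, unitaryRep w • z = c • z := by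
  obtain ⟨c, hc⟩ := matRep_mem_range_scalar hw
  have hscalar : (toUnitary (integralRep w)).1 = scalar (Fin 3) (CycInt.toComplex c) := by
    refine toUnitary_eq_of_mul_eq ?_
    have hmap : (integralRep w).1.map CycInt.toComplex = scalar (Fin 3) (CycInt.toComplex c) := by
      rw [show (integralRep w).1 = scalar (Fin 3) c from hc.symm, scalar_apply,
        diagonal_map (map_zero _)]
      rfl
    rw [hmap]
    exact (scalar_comm _ (Commute.all _) _)
  have hsmul (z : Fin 3 → ℂ) : unitaryRep w • z = CycInt.toComplex c • z := by
    rw [unitaryRep_smul]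
    change (toUnitary (integralRep w)).1 *ᵥ z = _
    rw [hscalar, scalar_apply, ← smul_one_eq_diagonal, smul_mulVec, one_mulVec]
  refine ⟨_, ?_, hsmul⟩
  have h := U21.lorentzSq_smul (unitaryRep w) origin
  rwa [hsmul, lorentzSq_smul, lorentzSq_origin, mul_one] at h

theorem normSq_unitaryRep_apply_two_two_eq {w w' : FreeGroup CSgen}
    (h : PresentedGroup.mk csRels w = PresentedGroup.mk csRels w') :
    normSq ((unitaryRep w).1 2 2) = normSq ((unitaryRep w').1 2 2) := by
  obtain ⟨c, hc, hsmul⟩ := exists_normSq_eq_one_and_smul_eq (w := w * w'⁻¹)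
    (by rw [map_mul, map_inv, h, mul_inv_cancel])
  rw [← inv_mul_cancel_right w w', map_mul, ← U21.smul_origin_apply, mul_smul, hsmul,
    Pi.smul_apply, smul_eq_mul, normSq_mul, hc, one_mul, U21.smul_origin_apply]

theorem map_midEval {M N : Type*} [Monoid M] [Monoid N] (f : M →* N) (u b : M) (n : Fin 3) :
    f (midEval u b n) = midEval (f u) (f b) n := by
  fin_cases n <;> simp [midEval]

theorem midRep_mul_val_mul_midRep_mem_of_normSq_lt {w : FreeGroup CSgen} {n m : Fin 3}
    {x : NormalForm} (hw : PresentedGroup.mk csRels w = midRep n * x.val * midRep m)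
    (h : normSq ((unitaryRep w).1 2 2) < 11) :
    midRep n * x.val * midRep m ∈ Set.range CosetWord.val := by
  let lift : FreeGroup CSgen := midEval (.of .u) (.of .b) n * x.eval (.of .u) (.of .v) *
    midEval (.of .u) (.of .b) m
  have hlift : PresentedGroup.mk csRels lift = midRep n * x.val * midRep m := by
    simp only [lift, map_mul, map_midEval, NormalForm.map_eval]
    rfl
  have hmat : matRep lift =
      midEval matU matB n * x.eval matU matV * midEval matU matB m := by
    simp only [lift, map_mul, map_midEval, NormalForm.map_eval, matRep_u, matRep_v, matRep_b]
  refine (isLarge_or_midRep_mul_val_mul_midRep_mem n m x).resolve_left fun hlarge => ?_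
  have hheight := eleven_lt_realHom hlarge
  rw [← hmat, ← CycInt.normSq_toComplex, show (matRep lift) 2 2 = (integralRep lift).1 2 2 from rfl,
    ← toUnitary_apply_two_two, ← coe_unitaryRep,
    ← normSq_unitaryRep_apply_two_two_eq (hw.trans hlift.symm)] at hheight
  exact hheight.not_gt h

theorem NormalForm.repEval_mem {M : Type*} [Group M] {S : Subgroup M} {u v : M} (hu : u ∈ S)
    (hv : v ∈ S) (i : Fin 6) : repEval u v i ∈ S := by
  fin_cases i
  exacts [one_mem S, hu, mul_mem hv hu, mul_mem (pow_mem hv 2) hu, mul_mem (pow_mem hv 3) hu,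
    mul_mem (mul_mem hu (pow_mem hv 3)) hu]

theorem NormalForm.eval_mem {M : Type*} [Group M] {S : Subgroup M} {u v : M} (hu : u ∈ S)
    (hv : v ∈ S) (x : NormalForm) : x.eval u v ∈ S :=
  mul_mem (repEval_mem hu hv _) (mul_mem (pow_mem hv _) (pow_mem (pow_mem (mul_mem hu hv) _) _))

theorem exists_mem_stabWords_mk_eq_val (x : NormalForm) :
    ∃ k ∈ stabWords, PresentedGroup.mk csRels k = x.val :=
  ⟨x.eval (.of .u) (.of .v), NormalForm.eval_mem of_u_mem_stabWords of_v_mem_stabWords x, by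
    rw [NormalForm.map_eval]; rfl⟩

/-- Products of two words that move the centre by a bounded amount are again words. -/
theorem val_mul_val_mem_of_normSq_lt {w : FreeGroup CSgen} {t t' : CosetWord}
    (hw : PresentedGroup.mk csRels w = t.val * t'.val) (h : normSq ((unitaryRep w).1 2 2) < 11) :
    t.val * t'.val ∈ Set.range CosetWord.val := by
  obtain ⟨a, ha, hma⟩ := exists_mem_stabWords_mk_eq_val t.left
  obtain ⟨d, hd, hmd⟩ := exists_mem_stabWords_mk_eq_val t'.right
  have hinner : PresentedGroup.mk csRels (a⁻¹ * w * d⁻¹) =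
      midRep t.mid * (t.right * t'.left).val * midRep t'.mid := by
    rw [map_mul, map_mul, map_inv, map_inv, hw, hma, hmd, CosetWord.val, CosetWord.val,
      NormalForm.val_mul]
    group
  have hmem := val_mul_mem_range_val (midRep_mul_val_mul_midRep_mem_of_normSq_lt hinner
    (by rwa [unitaryRep_mul_mul_apply_two_two (inv_mem ha) (inv_mem hd)])) t.left t'.right
  rw [NormalForm.val_mul] at hmem
  simpa only [CosetWord.val, mul_assoc] using hmem

/-! ### The covering by balls -/

theorem inv_mem_range_val {g : CS} (hg : g ∈ Set.range CosetWord.val) :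
    g⁻¹ ∈ Set.range CosetWord.val := by
  obtain ⟨t, rfl⟩ := hg
  have hmid : (midRep t.mid)⁻¹ ∈ Set.range CosetWord.val := by
    obtain h | h | h : t.mid = 0 ∨ t.mid = 1 ∨ t.mid = 2 := by lia
    · rw [h, midRep_zero, inv_one]
      exact one_mem_range_val
    · rw [h, midRep_one, ← gb_mul_gb, gb_mul_gb_eq, mul_assoc (gj * gb)]
      exact mul_midRep_mul_mem_range_val ⟨⟨0, 0, 1⟩, by simp [NormalForm.val, NormalForm.repEval]⟩
        ⟨⟨0, 3, 1⟩, by simp [NormalForm.val, NormalForm.repEval, gv_pow_three]⟩ 1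
    · have hinv : (midRep 2)⁻¹ = gu * midRep 2 * 1 := by
        rw [midRep_two, gu_mul_gb_gu_inv_gb]; group
      rw [h, hinv]
      exact mul_midRep_mul_mem_range_val ⟨⟨1, 0, 0⟩, by simp [NormalForm.val, NormalForm.repEval]⟩
        ⟨1, NormalForm.val_one⟩ 2
  have hmem := val_mul_mem_range_val hmid t.right⁻¹ t.left⁻¹
  rwa [NormalForm.val_inv, NormalForm.val_inv, mul_assoc, ← _root_.mul_inv_rev,
    ← _root_.mul_inv_rev] at hmem

/-- Two words are adjacent if their quotient is the value of a `CosetWord`. -/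
def IsAdjacent (i k : FreeGroup CSgen) : Prop :=
  PresentedGroup.mk csRels (i⁻¹ * k) ∈ Set.range CosetWord.val

namespace IsAdjacent

theorem refl (i : FreeGroup CSgen) : IsAdjacent i i := by
  rw [IsAdjacent, inv_mul_cancel, map_one]
  exact one_mem_range_val

theorem symm {i k : FreeGroup CSgen} (h : IsAdjacent i k) : IsAdjacent k i := by
  have hinv := inv_mem_range_val h
  rwa [← map_inv, _root_.mul_inv_rev, inv_inv] at hinv

theorem trans {i k l : FreeGroup CSgen} {x : HypPlane} (hi : x ∈ hypBall 2.1 (unitaryRep i))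
    (hl : x ∈ hypBall 2.1 (unitaryRep l)) (hik : IsAdjacent i k) (hkl : IsAdjacent k l) :
    IsAdjacent i l := by
  obtain ⟨⟨t, ht⟩, ⟨t', ht'⟩⟩ := And.intro hik hkl
  have hmk : PresentedGroup.mk csRels (i⁻¹ * l) = t.val * t'.val := by
    rw [ht, ht', ← map_mul]; group
  rw [IsAdjacent, hmk]
  refine val_mul_val_mem_of_normSq_lt hmk
    (U21.normSq_apply_two_two_lt (z := (unitaryRep i)⁻¹ • affineVec x) ?_ ?_ ?_)
  · rw [U21.lorentzSq_smul]; exact lorentzSq_affineVec_pos x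
  · rw [U21.lorentzSq_smul]; exact hi
  · rw [map_mul, map_inv, coshForm_mul_smul, U21.lorentzSq_smul]; exact hl

theorem mul_of (i : FreeGroup CSgen) (x : CSgen) : IsAdjacent i (i * .of x) := by
  rw [IsAdjacent, inv_mul_cancel_left]
  have hone : (1 : CS) ∈ Set.range NormalForm.val := ⟨1, NormalForm.val_one⟩
  have hstab {w : FreeGroup CSgen} (hw : w ∈ stabWords) :
      PresentedGroup.mk csRels w ∈ Set.range CosetWord.val := by
    simpa [midRep_zero] using
      mul_midRep_mul_mem_range_val (mk_mem_range_val_of_mem_stabWords hw) hone 0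
  cases x
  · exact hstab of_u_mem_stabWords
  · exact hstab of_v_mem_stabWords
  · have h := mul_midRep_mul_mem_range_val hone hone 1
    rwa [one_mul, mul_one, midRep_one] at h

end IsAdjacent

theorem exists_isAdjacent_mem_hypClosedBall {i : FreeGroup CSgen} {x : HypPlane}
    (hx : x ∈ hypBall 2.1 (unitaryRep i)) :
    ∃ k, IsAdjacent i k ∧ x ∈ hypClosedBall 2 (unitaryRep k) := by
  set z := (unitaryRep i)⁻¹ • affineVec x with hz
  have hz_pos : 0 < lorentzSq z := by rw [hz, U21.lorentzSq_smul]; exact lorentzSq_affineVec_pos x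
  have hz₂ : normSq (z 2)⁻¹ > 0 := normSq_pos.2 (inv_ne_zero (apply_two_ne_zero hz_pos))
  obtain ⟨g, hg, hle⟩ := exists_coshForm_le_two_mul (z := (z 2)⁻¹ • z)
    (inv_mul_cancel₀ (apply_two_ne_zero hz_pos)) (by
      rw [Pi.smul_apply, smul_eq_mul, normSq_mul, lorentzSq_smul, mul_left_comm,
        mul_lt_mul_iff_right₀ hz₂, hz, U21.lorentzSq_smul]
      exact hx)
  refine ⟨i * g, by rwa [IsAdjacent, inv_mul_cancel_left], ?_⟩
  rw [coshForm_smul, lorentzSq_smul, mul_left_comm, mul_le_mul_iff_right₀ hz₂, hz,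
    U21.lorentzSq_smul, ← coshForm_mul_smul (unitaryRep i), smul_inv_smul, ← map_mul] at hle
  exact hle

theorem exists_smul_of_eq_self (x : CSgen) : ∃ p : Fin 3 → ℂ,
    unitaryRep (.of x) • p = p ∧ 0 < lorentzSq p ∧ normSq (p 2) < 2.1 * lorentzSq p := by
  have horigin : 0 < lorentzSq origin ∧ normSq (origin 2) < 2.1 * lorentzSq origin := by
    rw [lorentzSq_origin]
    norm_num [origin]
  cases x
  · exact ⟨origin, smul_origin_of_mem_stabWords of_u_mem_stabWords, horigin⟩
  · exact ⟨origin, smul_origin_of_mem_stabWords of_v_mem_stabWords, horigin⟩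
  · refine ⟨![1, 0, scale], ?_, ?_⟩
    · rw [unitaryRep_smul, smul_b, lorentzForm_apply]
      simp [mirrorNormal]
    · have hs := sqrt_three_bounds.1
      have hsq : lorentzSq ![1, 0, scale] = √3 := by
        simp [lorentzSq, normSq_ofReal, scale_mul_scale]
      rw [hsq]
      simp [normSq_ofReal, scale_mul_scale]
      linarith

theorem hypBall_inter_hypBall_mul_of_nonempty (i : FreeGroup CSgen) (x : CSgen) :
    (hypBall 2.1 (unitaryRep i) ∩ hypBall 2.1 (unitaryRep (i * .of x))).Nonempty := by
  obtain ⟨p, hfix, hpos, hlt⟩ := exists_smul_of_eq_self x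
  have hp : unitaryRep (i * .of x) • p = unitaryRep i • p := by rw [map_mul, mul_smul, hfix]
  have hpos' : 0 < lorentzSq (unitaryRep i • p) := by rwa [U21.lorentzSq_smul]
  obtain ⟨t, ht⟩ := exists_affineVec_eq_smul hpos'
  refine ⟨t, (mem_hypBall_iff ht).2 ?_, (mem_hypBall_iff ht).2 ?_⟩
  · rwa [coshForm_self_smul, U21.lorentzSq_smul]
  · rwa [← hp, coshForm_self_smul, U21.lorentzSq_smul]

/-- The covering of the complex hyperbolic plane by balls around the translates of the centre. -/
def ballCover : GluingData HypPlane (FreeGroup CSgen) where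
  sheet i := hypBall 2.1 (unitaryRep i)
  core i := hypClosedBall 2 (unitaryRep i)
  rel := IsAdjacent
  rel_refl := IsAdjacent.refl
  rel_symm := IsAdjacent.symm
  rel_trans hi _ hl := IsAdjacent.trans hi hl
  isOpen_sheet i := isOpen_hypBall _ _
  core_subset_sheet i x hx := by
    have hpos := lorentzSq_affineVec_pos x
    have hle : coshForm (unitaryRep i) (affineVec x) ≤ 2 * lorentzSq (affineVec x) := hx
    exact hle.trans_lt (by linarith)
  exists_rel_mem_core := exists_isAdjacent_mem_hypClosedBall
  exists_isOpen x := by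
    obtain ⟨W, hW, hx, h⟩ := exists_isOpen_forall_hypBall x
    exact ⟨W, hW, hx, fun i => h (unitaryRep i)⟩

open Relation in
theorem reflTransGen_isAdjacent_and_nonempty (i k : FreeGroup CSgen) :
    ReflTransGen (fun i k => IsAdjacent i k ∧
      (hypBall 2.1 (unitaryRep i) ∩ hypBall 2.1 (unitaryRep k)).Nonempty) i k := by
  obtain ⟨w, rfl⟩ : ∃ w, k = i * w := ⟨i⁻¹ * k, (mul_inv_cancel_left i k).symm⟩
  induction w using FreeGroup.induction_on generalizing i with
  | C1 => rw [mul_one]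
  | of x => exact .single ⟨.mul_of i x, hypBall_inter_hypBall_mul_of_nonempty i x⟩
  | inv_of x _ =>
    have hadj := IsAdjacent.mul_of (i * (.of x)⁻¹) x
    have hne := hypBall_inter_hypBall_mul_of_nonempty (i * (.of x)⁻¹) x
    rw [inv_mul_cancel_right] at hadj hne
    exact .single ⟨hadj.symm, Set.inter_comm _ _ ▸ hne⟩
  | mul w w' h h' =>
    rw [← mul_assoc]
    exact (h i).trans (h' _)

theorem exists_mem_hypBall_and_isAdjacent : (∀ x : HypPlane, ∃ i, x ∈ hypBall 2.1 (unitaryRep i)) ∧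
    ∀ i k x, x ∈ hypBall 2.1 (unitaryRep i) → x ∈ hypBall 2.1 (unitaryRep k) → IsAdjacent i k :=
  ballCover.exists_mem_sheet_and_rel (fun i => isPreconnected_hypBall (by norm_num) _)
    reflTransGen_isAdjacent_and_nonempty
    (hypBall_inter_hypBall_mul_of_nonempty 1 .u).left

end

/-! ### Fixed points of isometries of finite order -/

section

open Complex ComplexConjugate

section Eigenspace

open Polynomial in
theorem iSup_eigenspace_eq_top_of_pow_eq_smul {K V : Type*} [Field K] [IsAlgClosed K] [CharZero K]
    [AddCommGroup V] [Module K V] [FiniteDimensional K V] {T : Module.End K V} {n : ℕ}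
    (hn : n ≠ 0) {c : K} (hc : c ≠ 0) (hT : T ^ n = c • 1) : ⨆ μ, T.eigenspace μ = ⊤ := by
  have haeval : aeval T (X ^ n - C c) = 0 := by
    rw [map_sub, map_pow, aeval_X, aeval_C, hT, Algebra.algebraMap_eq_smul_one, sub_self]
  exact (Module.End.isSemisimple_of_squarefree_aeval_eq_zero
    (separable_X_pow_sub_C c (Nat.cast_ne_zero.2 hn) hc).squarefree haeval).iSup_eigenspace_eq_top

variable {V : Type*} [AddCommGroup V] [Module ℂ V] {T : Module.End ℂ V}

theorem norm_eq_one_of_hasEigenvalue_of_pow_eq_smul {n : ℕ} (hn : n ≠ 0) {c : ℂ} (hc : ‖c‖ = 1)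
    (hT : T ^ n = c • 1) {μ : ℂ} (hμ : T.HasEigenvalue μ) : ‖μ‖ = 1 := by
  obtain ⟨z, hz⟩ := hμ.exists_hasEigenvector
  have hpow := hz.pow_apply n
  rw [hT, LinearMap.smul_apply, Module.End.one_apply] at hpow
  rw [← pow_eq_one_iff_of_nonneg (norm_nonneg μ) hn, ← norm_pow,
    ← smul_left_injective ℂ hz.2 hpow, hc]

theorem apply_eq_zero_of_mem_eigenspace {f : V →ₗ⋆[ℂ] V →ₗ[ℂ] ℂ}
    (hf : ∀ x y, f (T x) (T y) = f x y) {μ ν : ℂ} (hμ : ‖μ‖ = 1) (hμν : μ ≠ ν) {x y : V}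
    (hx : x ∈ T.eigenspace μ) (hy : y ∈ T.eigenspace ν) : f x y = 0 := by
  have h := hf x y
  rw [Module.End.mem_eigenspace_iff.1 hx, Module.End.mem_eigenspace_iff.1 hy, map_smul,
    map_smulₛₗ, LinearMap.smul_apply, smul_smul, smul_eq_mul] at h
  refine (mul_left_eq_self₀.1 h).resolve_left fun hconj => hμν ?_
  have hμ' : μ * conj μ = 1 := by rw [mul_conj, normSq_eq_norm_sq, hμ]; simp
  linear_combination ν * hμ' - μ * hconj

/-- A vector is the sum of its components in the eigenspaces, which are orthogonal to each other. -/
theorem exists_mem_eigenspace_and_apply_self_pos {f : V →ₗ⋆[ℂ] V →ₗ[ℂ] ℂ}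
    (hf : ∀ x y, f (T x) (T y) = f x y) (hnorm : ∀ μ, T.HasEigenvalue μ → ‖μ‖ = 1)
    (htop : ⨆ μ, T.eigenspace μ = ⊤) {x : V} (hx : 0 < (f x x).re) :
    ∃ μ, ‖μ‖ = 1 ∧ ∃ z ∈ T.eigenspace μ, 0 < (f z z).re := by
  obtain ⟨a, ha, rfl⟩ := (Submodule.mem_iSup_iff_exists_finsupp _ x).1 (htop ▸ Submodule.mem_top)
  have hnorm' {μ : ℂ} (hμ : μ ∈ a.support) : ‖μ‖ = 1 :=
    hnorm μ (Module.End.hasEigenvalue_of_hasEigenvector ⟨ha μ, Finsupp.mem_support_iff.1 hμ⟩)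
  have hdiag : f (a.sum fun _ z => z) (a.sum fun _ z => z) = ∑ μ ∈ a.support, f (a μ) (a μ) := by
    simp only [Finsupp.sum, map_sum, LinearMap.sum_apply]
    refine Finset.sum_congr rfl fun μ hμ => ?_
    exact Finset.sum_eq_single_of_mem μ hμ fun ν hν hne =>
      apply_eq_zero_of_mem_eigenspace hf (hnorm' hν) hne (ha ν) (ha μ)
  rw [hdiag, re_sum] at hx
  obtain ⟨μ, hμ, hpos⟩ := Finset.exists_lt_of_sum_lt (f := fun _ => (0 : ℝ)) (by simpa using hx)
  exact ⟨μ, hnorm' hμ, a μ, ha μ, hpos⟩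

end Eigenspace

open scoped Matrix.Module

/-- The action of words on `ℂ³`, by linear maps. -/
noncomputable def actionEnd : FreeGroup CSgen →* Module.End ℂ (Fin 3 → ℂ) :=
  (DistribMulAction.toModuleEnd ℂ (Fin 3 → ℂ)).comp unitaryRep

theorem actionEnd_apply (w : FreeGroup CSgen) (z : Fin 3 → ℂ) :
    actionEnd w z = unitaryRep w • z := rfl

theorem exists_actionEnd_pow_eq_smul {w : FreeGroup CSgen}
    (hw : IsOfFinOrder (PresentedGroup.mk csRels w)) :
    ∃ n ≠ 0, ∃ c : ℂ, ‖c‖ = 1 ∧ actionEnd w ^ n = c • 1 := by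
  obtain ⟨n, hn, hpow⟩ := isOfFinOrder_iff_pow_eq_one.1 hw
  rw [← map_pow] at hpow
  obtain ⟨c, hc, hsmul⟩ := exists_normSq_eq_one_and_smul_eq hpow
  refine ⟨n, hn.ne', c, ?_, LinearMap.ext fun z => ?_⟩
  · rwa [normSq_eq_norm_sq, pow_eq_one_iff_of_nonneg (norm_nonneg c) two_ne_zero] at hc
  · rw [LinearMap.smul_apply, Module.End.one_apply, ← hsmul, ← actionEnd_apply, map_pow]

theorem exists_smul_eq_smul_of_isOfFinOrder {w : FreeGroup CSgen}
    (hw : IsOfFinOrder (PresentedGroup.mk csRels w)) :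
    ∃ (z : Fin 3 → ℂ) (μ : ℂ), 0 < lorentzSq z ∧ ‖μ‖ = 1 ∧ unitaryRep w • z = μ • z := by
  obtain ⟨n, hn, c, hc, hpow⟩ := exists_actionEnd_pow_eq_smul hw
  obtain ⟨μ, hμ, z, hz, hpos⟩ := exists_mem_eigenspace_and_apply_self_pos (T := actionEnd w)
    (f := lorentzForm) (x := origin) (U21.lorentzForm_smul_smul (unitaryRep w))
    (fun _ => norm_eq_one_of_hasEigenvalue_of_pow_eq_smul hn hc hpow)
    (iSup_eigenspace_eq_top_of_pow_eq_smul hn (norm_ne_zero_iff.1 (by simp [hc])) hpow)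
    (by simp [lorentzForm_self, lorentzSq_origin])
  rw [lorentzForm_self, ofReal_re] at hpos
  exact ⟨z, μ, hpos, hμ, Module.End.mem_eigenspace_iff.1 hz⟩

/-- The fixed point of an element of finite order lies in one of the balls, which the element moves
to an overlapping one. -/
theorem exists_isConj_coset_word_val {g : CS} (hg : IsOfFinOrder g) :
    ∃ t : CosetWord, IsConj t.val g := by
  obtain ⟨w, rfl⟩ := PresentedGroup.mk_surjective csRels g
  obtain ⟨z, μ, hz, hμ, hfix⟩ := exists_smul_eq_smul_of_isOfFinOrder hg
  obtain ⟨x, hx⟩ := exists_affineVec_eq_smul hz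
  obtain ⟨i, hi⟩ := exists_mem_hypBall_and_isAdjacent.1 x
  have hwi : x ∈ hypBall 2.1 (unitaryRep (w * i)) := by
    rw [mem_hypBall_iff hx] at hi ⊢
    rw [map_mul, ← one_mul (coshForm _ z), ← one_pow 2, ← hμ, ← normSq_eq_norm_sq, ← coshForm_smul,
      ← hfix, coshForm_mul_smul]
    exact hi
  obtain ⟨t, ht⟩ := exists_mem_hypBall_and_isAdjacent.2 _ _ _ hi hwi
  refine ⟨t, isConj_iff.2 ⟨PresentedGroup.mk csRels i, ?_⟩⟩
  rw [ht]
  simp [mul_assoc]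

end

/-! ### Traces of elements of finite order -/

section

open Complex ComplexConjugate
open scoped Matrix.Module

/-- Goldman's discriminant function of the trace `t` and the determinant `d` of a unitary `3 × 3`
matrix. -/
noncomputable def goldmanDisc (t d : ℂ) : ℝ :=
  normSq t ^ 2 - 8 * (t ^ 3 * conj d).re + 18 * normSq t - 27

theorem goldmanDisc_sum_prod {p q r : ℂ} (hp : ‖p‖ = 1) (hq : ‖q‖ = 1) (hr : ‖r‖ = 1) :
    goldmanDisc (p + q + r) (p * q * r) =
      -(normSq (p - q) * normSq (q - r) * normSq (r - p)) := by
  have hp0 : p ≠ 0 := norm_ne_zero_iff.1 (by simp [hp])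
  have hq0 : q ≠ 0 := norm_ne_zero_iff.1 (by simp [hq])
  have hr0 : r ≠ 0 := norm_ne_zero_iff.1 (by simp [hr])
  rw [goldmanDisc, ← ofReal_inj]
  push_cast
  simp only [re_eq_add_conj, normSq_eq_conj_mul_self, map_add, map_sub, map_mul, map_pow,
    ← inv_eq_conj hp, ← inv_eq_conj hq, ← inv_eq_conj hr, map_inv₀, inv_inv]
  field_simp
  ring

theorem goldmanDisc_trace_det_nonpos {M : Matrix (Fin 3) (Fin 3) ℂ}
    (hM : ∀ μ ∈ spectrum ℂ M, ‖μ‖ = 1) : goldmanDisc M.trace M.det ≤ 0 := by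
  have hcard : M.charpoly.roots.card = 3 := by
    rw [IsAlgClosed.card_roots_eq_natDegree, M.charpoly_natDegree_eq_dim, Fintype.card_fin]
  have hnorm : ∀ μ ∈ M.charpoly.roots, ‖μ‖ = 1 := fun μ hμ =>
    hM μ (Matrix.mem_spectrum_of_isRoot_charpoly (Polynomial.isRoot_of_mem_roots hμ))
  obtain ⟨p, q, r, hroots⟩ := Multiset.card_eq_three.1 hcard
  rw [Matrix.trace_eq_sum_roots_charpoly, Matrix.det_eq_prod_roots_charpoly]
  simp only [hroots, Multiset.insert_eq_cons, Multiset.mem_cons, Multiset.mem_singleton,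
    forall_eq_or_imp, forall_eq, Multiset.sum_cons, Multiset.sum_singleton, Multiset.prod_cons,
    Multiset.prod_singleton, ← add_assoc, ← mul_assoc] at hnorm ⊢
  rw [goldmanDisc_sum_prod hnorm.1 hnorm.2.1 hnorm.2.2, neg_nonpos]
  exact mul_nonneg (mul_nonneg (normSq_nonneg _) (normSq_nonneg _)) (normSq_nonneg _)

namespace CycInt

/-- Goldman's discriminant function, for a trace and a determinant in `ℤ[ζ]`. -/
def goldmanDisc (t d : CycInt) : ℤ√3 :=
  QuadraticAlgebra.norm t ^ 2 - 4 * QuadraticAlgebra.trace (t ^ 3 * star d) +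
    18 * QuadraticAlgebra.norm t - 27

theorem realHom_goldmanDisc (t d : CycInt) :
    realHom (goldmanDisc t d) = CartwrightSteger.goldmanDisc (toComplex t) (toComplex d) := by
  have htrace := two_mul_re_toComplex (t ^ 3 * star d)
  rw [map_mul, map_pow, toComplex_star] at htrace
  simp only [goldmanDisc, CartwrightSteger.goldmanDisc, map_sub, map_add, map_mul, map_pow,
    map_ofNat, ← htrace, normSq_toComplex]
  ring

/-- A criterion for `0 < a + b√3`, as `√3 > 3 / 2`. -/
theorem realHom_pos {r : ℤ√3} (him : 0 < r.im) (hre : -3 * r.im ≤ 2 * r.re) : 0 < realHom r := by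
  obtain ⟨a, b⟩ := r
  have hb : (0 : ℝ) < b := by exact_mod_cast him
  have hab : (-3 * b : ℝ) ≤ 2 * a := by exact_mod_cast hre
  have hsqrt : (3 / 2 : ℝ) < √3 := Real.lt_sqrt_of_sq_lt (by norm_num)
  rw [realHom_apply]
  nlinarith

end CycInt

theorem goldmanDisc_matRep_nonpos {w : FreeGroup CSgen}
    (hw : IsOfFinOrder (PresentedGroup.mk csRels w)) :
    CycInt.realHom (CycInt.goldmanDisc (matRep w).trace (matRep w).det) ≤ 0 := by
  obtain ⟨n, hn, c, hc, hpow⟩ := exists_actionEnd_pow_eq_smul hw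
  have hlin : actionEnd w = Matrix.toLin' (toUnitary (integralRep w)).1 :=
    LinearMap.ext (unitaryRep_smul w)
  have h := goldmanDisc_trace_det_nonpos (M := (toUnitary (integralRep w)).1) fun μ hμ => by
    rw [← Matrix.spectrum_toLin', ← hlin] at hμ
    exact norm_eq_one_of_hasEigenvalue_of_pow_eq_smul hn hc hpow (.of_mem_spectrum hμ)
  rwa [trace_toUnitary, det_toUnitary, ← CycInt.realHom_goldmanDisc] at h

end

/-! ### Words up to conjugation -/

section

open NormalForm CosetWord

/-- A word `σ y` considered up to conjugation, where `σ` is the double coset representative number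
`mid` and `y` is a normal form. -/
structure CyclicWord where
  mid : Fin 3
  right : NormalForm
deriving DecidableEq

namespace CyclicWord

/-- The element of the group represented by a cyclic word. -/
def val (w : CyclicWord) : CS := midRep w.mid * w.right.val

end CyclicWord

/-- The cyclic word `σ y x` of a word `x σ y`. -/
def CosetWord.cyclic (t : CosetWord) : CyclicWord := ⟨t.mid, t.right * t.left⟩

theorem isConj_mul_comm (x y : CS) : IsConj (x * y) (y * x) :=
  isConj_iff.2 ⟨y, by group⟩

theorem CosetWord.isConj_cyclic_val (t : CosetWord) : IsConj t.cyclic.val t.val := by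
  rw [CosetWord.val, mul_assoc, cyclic, CyclicWord.val, NormalForm.val_mul, ← mul_assoc]
  exact isConj_mul_comm _ _

/-- Elements of `⟨u, v⟩` that commute with the double coset representative number `s`. -/
def midCentralizer : Fin 3 → List NormalForm :=
  ![(List.finRange 6).flatMap fun i => (List.finRange 4).map fun q => ⟨i, q, 0⟩,
    (List.finRange 4).map fun q => ⟨0, q, 0⟩, [1, ⟨1, 0, 0⟩, ⟨2, 1, 11⟩]]

theorem commute_val_midRep {s : Fin 3} {c : NormalForm} (hc : c ∈ midCentralizer s) :
    Commute c.val (midRep s) := by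
  fin_cases s
  · exact .one_right _
  · obtain ⟨q, -, rfl⟩ := List.mem_map.1 hc
    simpa [NormalForm.val, repEval, midRep_one] using commute_gv_gb.pow_left q
  · have hgu : Commute gu (midRep 2) := by
      rw [midRep_two]
      exact commute_gu_gb_gu_inv_gb
    have hc' : c ∈ [1, ⟨1, 0, 0⟩, ⟨2, 1, 11⟩] := hc
    simp only [List.mem_cons, List.not_mem_nil, or_false] at hc'
    obtain rfl | rfl | rfl := hc'
    · rw [val_one]
      exact .one_left _
    · simpa [NormalForm.val, repEval] using hgu
    · rw [val_two_one_eleven]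
      exact hgu.inv_left

namespace CyclicWord

/-- Conjugation by a normal form that commutes with `σ`. -/
def conj (c : NormalForm) (w : CyclicWord) : CyclicWord := ⟨w.mid, c * w.right * c⁻¹⟩

theorem isConj_val_conj {w : CyclicWord} {c : NormalForm} (hc : c ∈ midCentralizer w.mid) :
    IsConj (w.conj c).val w.val := by
  refine isConj_iff.2 ⟨c.val⁻¹, ?_⟩
  rw [val, conj, val_mul, val_mul, val_inv, ← mul_assoc (midRep _), ← mul_assoc (midRep _),
    ← (commute_val_midRep hc).eq, val]
  group

/-- The inverse of a cyclic word. -/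
def inv (w : CyclicWord) : CyclicWord :=
  ⟨w.mid, ![w.right⁻¹, ⟨0, 3, 1⟩ * w.right⁻¹ * ⟨0, 0, 1⟩, w.right⁻¹ * ⟨1, 0, 0⟩] w.mid⟩

theorem isConj_val_inv (w : CyclicWord) : IsConj w.inv.val w.val⁻¹ := by
  obtain ⟨s, k⟩ := w
  rw [val, val, mul_inv_rev]
  fin_cases s
  · change IsConj (1 * (k⁻¹).val) (k.val⁻¹ * 1⁻¹)
    rw [val_inv, one_mul, inv_one, mul_one]
  · change IsConj (gb * (⟨0, 3, 1⟩ * k⁻¹ * ⟨0, 0, 1⟩ : NormalForm).val) (k.val⁻¹ * gb⁻¹)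
    have hright : (⟨0, 3, 1⟩ * k⁻¹ * ⟨0, 0, 1⟩ : NormalForm).val = gv⁻¹ * gj * k.val⁻¹ * gj := by
      rw [val_mul, val_mul, val_inv]
      simp [NormalForm.val, repEval, gv_pow_three]
    have hinv : gb⁻¹ * k.val⁻¹ = gj * (gb * (gv⁻¹ * gj * k.val⁻¹)) := by
      rw [← gb_mul_gb, gb_mul_gb_eq]
      group
    refine .trans ?_ (isConj_mul_comm gb⁻¹ k.val⁻¹)
    rw [hright, hinv, ← mul_assoc gb]
    exact isConj_mul_comm _ gj
  · change IsConj (midRep 2 * (k⁻¹ * ⟨1, 0, 0⟩ : NormalForm).val) (k.val⁻¹ * (midRep 2)⁻¹)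
    have hright : (k⁻¹ * ⟨1, 0, 0⟩ : NormalForm).val = k.val⁻¹ * gu := by
      rw [val_mul, val_inv]
      simp [NormalForm.val, repEval]
    have hinv : (midRep 2)⁻¹ = gu * midRep 2 := by
      rw [midRep_two, gu_mul_gb_gu_inv_gb]
      group
    rw [hright, hinv, ← mul_assoc k.val⁻¹]
    exact isConj_mul_comm _ _

/-- Conjugation by `b c`, where the result is known to be a word. -/
def gbConj (w : CyclicWord) (c : NormalForm) : Option CyclicWord :=
  (gbMul ⟨w.mid, c, w.right * c⁻¹⟩).bind fun t =>
    (midRepMul t.mid ⟨1, t.right * ⟨0, 0, 1⟩, ⟨0, 3, 1⟩ * t.left⟩).map CosetWord.cyclic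

theorem isConj_val_of_mem_gbConj {w w' : CyclicWord} {c : NormalForm} (h : w' ∈ gbConj w c) :
    IsConj w'.val w.val := by
  obtain ⟨t, ht, h⟩ := Option.bind_eq_some_iff.1 h
  obtain ⟨t', ht', rfl⟩ := Option.map_eq_some_iff.1 h
  have hmid : t'.val = midRep t.mid * t.right.val * gb⁻¹ * t.left.val := by
    rw [val_of_mem_midRepMul ht', CosetWord.val, val_mul, val_mul, midRep_one, ← gb_mul_gb,
      gb_mul_gb_eq]
    simp [NormalForm.val, repEval, gv_pow_three, mul_assoc]
  have hconj : t.val * gb⁻¹ = (gb * c.val) * w.val * (gb * c.val)⁻¹ := by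
    rw [val_of_mem_gbMul ht, CosetWord.val, val_mul, val_inv, CyclicWord.val]
    group
  refine t'.isConj_cyclic_val.trans (IsConj.trans ?_
    (isConj_iff.2 ⟨gb * c.val, hconj.symm⟩).symm)
  have hcomm := isConj_mul_comm (midRep t.mid * t.right.val * gb⁻¹) t.left.val
  rwa [← hmid, ← mul_assoc, ← mul_assoc] at hcomm

end CyclicWord

/-! ### The conjugacy classes of elements of finite order -/

/-- The assertion of the theorem for the element `g`. -/
def IsClassified (g : CS) : Prop :=
  g ≠ 1 → IsOfFinOrder g → ∃ t ∈ torsionReps, IsConj t g ∨ IsConj t⁻¹ g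

theorem IsClassified.isConj {g g' : CS} (hg : IsClassified g) (h : IsConj g g') :
    IsClassified g' := by
  intro hne hfin
  obtain ⟨x, rfl⟩ := isConj_iff.1 h
  have hne' : g ≠ 1 := by
    rintro rfl
    simp at hne
  have hfin' : IsOfFinOrder g :=
    ((MulAut.conj x).injective.isOfFinOrder_iff (f := (MulAut.conj x).toMonoidHom)).1 hfin
  obtain ⟨t, ht, htg⟩ := hg hne' hfin'
  exact ⟨t, ht, htg.imp (·.trans h) (·.trans h)⟩

theorem isConj_inv_inv {g h : CS} (hgh : IsConj g h) : IsConj g⁻¹ h⁻¹ := by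
  obtain ⟨x, rfl⟩ := isConj_iff.1 hgh
  exact isConj_iff.2 ⟨x, by group⟩

theorem IsClassified.of_inv {g : CS} (hg : IsClassified g⁻¹) : IsClassified g := by
  intro hne hfin
  obtain ⟨t, ht, htg⟩ := hg (inv_ne_one.2 hne) (isOfFinOrder_inv_iff.2 hfin)
  refine ⟨t, ht, (htg.imp isConj_inv_inv isConj_inv_inv).symm.imp ?_ ?_⟩ <;>
    simp only [_root_.inv_inv, imp_self]

namespace CyclicWord

/-- The word `w` or its inverse is conjugate to a member of `L` by an element of
`midCentralizer`. -/
def EquivMem (L : List CyclicWord) (w : CyclicWord) : Prop :=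
  ∃ c ∈ midCentralizer w.mid, w.conj c ∈ L ∨ w.inv.conj c ∈ L

instance (L : List CyclicWord) : DecidablePred (EquivMem L) := fun w =>
  inferInstanceAs (Decidable (∃ c ∈ midCentralizer w.mid, w.conj c ∈ L ∨ w.inv.conj c ∈ L))

theorem EquivMem.isClassified {L : List CyclicWord} {w : CyclicWord} (h : EquivMem L w)
    (hL : ∀ w ∈ L, IsClassified w.val) : IsClassified w.val := by
  obtain ⟨c, hc, hw | hw⟩ := h
  · exact (hL _ hw).isConj (isConj_val_conj hc)
  · exact (((hL _ hw).isConj (isConj_val_conj (w := w.inv) hc)).isConj (isConj_val_inv w)).of_inv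

/-- The members of `torsionReps` as cyclic words. -/
def torsionWords : List CyclicWord :=
  [⟨0, 0, 2, 0⟩, ⟨0, 0, 0, 6⟩, ⟨2, 2, 1, 11⟩, ⟨0, 1, 0, 0⟩, ⟨0, 0, 0, 4⟩, ⟨0, 1, 0, 4⟩,
    ⟨1, 1, 1, 0⟩, ⟨0, 0, 1, 0⟩, ⟨0, 0, 0, 3⟩, ⟨0, 0, 1, 3⟩, ⟨0, 0, 2, 3⟩, ⟨1, 2, 1, 11⟩,
    ⟨0, 0, 0, 2⟩, ⟨0, 0, 2, 2⟩, ⟨0, 3, 0, 1⟩, ⟨0, 3, 0, 5⟩, ⟨1, 4, 1, 0⟩, ⟨1, 0, 2, 0⟩,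
    ⟨0, 1, 1, 1⟩, ⟨1, 0, 0, 1⟩, ⟨1, 0, 1, 1⟩, ⟨0, 0, 0, 1⟩, ⟨0, 0, 0, 5⟩, ⟨0, 1, 3, 2⟩,
    ⟨0, 1, 3, 3⟩, ⟨0, 1, 3, 6⟩, ⟨0, 1, 3, 11⟩, ⟨0, 0, 2, 1⟩, ⟨0, 1, 2, 0⟩, ⟨0, 1, 0, 1⟩,
    ⟨0, 1, 0, 3⟩, ⟨1, 0, 1, 0⟩, ⟨1, 0, 3, 0⟩, ⟨0, 1, 1, 0⟩, ⟨0, 2, 0, 2⟩]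

theorem gb_mul_val_four_one_zero : gb * NormalForm.val ⟨4, 1, 0⟩ = gb * gv ^ 2 * gu⁻¹ * gj :=
  calc gb * NormalForm.val ⟨4, 1, 0⟩ = gb * (gv ^ 3 * gu * gv) := by
        simp [NormalForm.val, repEval]
    _ = gb * gv ^ 2 * (gv * gu * gv) := by group
    _ = _ := by rw [gv_gu_gv, commute_gj_gu.inv_right.eq, mul_assoc _ gu⁻¹]

theorem gb_mul_gj_pow_three : (gb * gj) ^ 3 = gb * (gv * gj) :=
  calc (gb * gj) ^ 3 = gb * gj * gb * gj * gb * gj := by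
        simp only [pow_succ, pow_zero, one_mul, mul_assoc]
    _ = gv * gb * gj := by rw [gb_gj_gb, inv_mul_cancel_right]
    _ = _ := by rw [commute_gv_gb.eq, mul_assoc]

theorem gb_mul_gv_zpow_neg_five : (gb * gv) ^ (-5 : ℤ) = gb * gv⁻¹ := by
  have hb : gb ^ (-5 : ℤ) = gb :=
    calc gb ^ (-5 : ℤ) = ((gb ^ 3)⁻¹) ^ 2 * gb := by group
      _ = gb := by rw [gb_pow_three, inv_one, one_pow, one_mul]
  have hv : gv ^ (-5 : ℤ) = gv⁻¹ :=
    calc gv ^ (-5 : ℤ) = (gv ^ 4)⁻¹ * gv⁻¹ := by group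
      _ = gv⁻¹ := by rw [gv_pow_four, inv_one, one_mul]
  rw [commute_gv_gb.symm.mul_zpow, hb, hv]

theorem map_val_torsionWords : torsionWords.map val = torsionReps := by
  simp only [torsionWords, torsionReps, List.map_cons, List.map_nil, val, midRep_zero, midRep_one,
    midRep_two, val_two_one_eleven, gb_mul_val_four_one_zero, gb_mul_gj_pow_three,
    gb_mul_gv_zpow_neg_five]
  simp [NormalForm.val, repEval, gv_pow_three, gj_pow_eleven, mul_assoc, pow_two]

theorem isClassified_val_of_mem_torsionWords : ∀ w ∈ torsionWords, IsClassified w.val :=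
  fun w hw _ _ => ⟨w.val, map_val_torsionWords ▸ List.mem_map_of_mem hw, .inl (.refl _)⟩

/-- The conjugators needed to reduce the members of `reducibleWords`. -/
def conjugators : List NormalForm :=
  [1, ⟨0, 0, 1⟩, ⟨0, 0, 2⟩, ⟨1, 0, 0⟩, ⟨1, 0, 1⟩, ⟨1, 1, 1⟩, ⟨1, 3, 1⟩]

/-- Words conjugate to members of `torsionWords` or their inverses by some `b c`. -/
def reducibleWords : List CyclicWord :=
  [⟨1, 0, 0, 0⟩, ⟨1, 0, 0, 3⟩, ⟨1, 0, 0, 11⟩, ⟨1, 0, 1, 3⟩, ⟨1, 0, 1, 11⟩, ⟨1, 1, 0, 2⟩,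
    ⟨1, 1, 2, 0⟩, ⟨1, 1, 2, 3⟩, ⟨1, 5, 0, 1⟩, ⟨2, 0, 0, 0⟩, ⟨2, 0, 0, 1⟩, ⟨2, 0, 0, 11⟩,
    ⟨2, 0, 1, 1⟩, ⟨2, 0, 2, 1⟩, ⟨2, 0, 3, 0⟩, ⟨2, 0, 3, 1⟩, ⟨2, 2, 1, 0⟩]

/-- Words conjugate to members of `reducibleWords` or their inverses by some `b c`. -/
def reducibleWords' : List CyclicWord := [⟨2, 0, 2, 0⟩, ⟨2, 2, 3, 1⟩]

theorem exists_gbConj_equivMem_torsionWords : ∀ w ∈ reducibleWords, ∃ c ∈ conjugators,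
    ∃ w' ∈ gbConj w c, EquivMem torsionWords w' := by
  decide +kernel

theorem exists_gbConj_equivMem_append : ∀ w ∈ reducibleWords', ∃ c ∈ conjugators,
    ∃ w' ∈ gbConj w c, EquivMem (torsionWords ++ reducibleWords) w' := by
  decide +kernel

/-- Representatives of the nontrivial cyclic words of finite order. -/
def finiteOrderWords : List CyclicWord := torsionWords ++ reducibleWords ++ reducibleWords'

theorem isClassified_val_of_mem_finiteOrderWords :
    ∀ w ∈ finiteOrderWords, IsClassified w.val := by
  have hreduce {L L' : List CyclicWord} (hL : ∀ w ∈ L, IsClassified w.val)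
      (h : ∀ w ∈ L', ∃ c ∈ conjugators, ∃ w' ∈ gbConj w c, EquivMem L w') :
      ∀ w ∈ L ++ L', IsClassified w.val := by
    rw [List.forall_mem_append]
    refine ⟨hL, fun w hw => ?_⟩
    obtain ⟨c, -, w', hw', hequiv⟩ := h w hw
    exact (hequiv.isClassified hL).isConj (isConj_val_of_mem_gbConj hw')
  exact hreduce (hreduce isClassified_val_of_mem_torsionWords
    exists_gbConj_equivMem_torsionWords) exists_gbConj_equivMem_append

theorem isClassified_val_one : IsClassified (val ⟨0, 1⟩) :=
  fun h => absurd (by rw [val, val_one, midRep_zero, mul_one]) h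

end CyclicWord

/-! ### Words of infinite order -/

namespace CyclicWord

open Matrix

/-- The element of the free group that a cyclic word spells. -/
def toFreeGroup (w : CyclicWord) : FreeGroup CSgen :=
  midEval (.of .u) (.of .b) w.mid * w.right.eval (.of .u) (.of .v)

theorem mk_toFreeGroup (w : CyclicWord) : PresentedGroup.mk csRels w.toFreeGroup = w.val := by
  simp only [toFreeGroup, map_mul, map_midEval, NormalForm.map_eval]
  rfl

theorem matRep_toFreeGroup (w : CyclicWord) :
    matRep w.toFreeGroup = midEval matU matB w.mid * w.right.eval matU matV := by
  simp only [toFreeGroup, map_mul, map_midEval, NormalForm.map_eval, matRep_u, matRep_v, matRep_b]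

/-- The matrix of `σ t v^q j^a`, without the factor `j^a`. -/
def matPart (s : Fin 3) (i : Fin 6) (q : Fin 4) : Matrix (Fin 3) (Fin 3) CycInt :=
  midEval matU matB s * (repEval matU matV i * matV ^ (q : ℕ))

theorem trace_matRep_toFreeGroup (s : Fin 3) (i : Fin 6) (q : Fin 4) (a : Fin 12) :
    (matRep (toFreeGroup ⟨s, i, q, a⟩)).trace =
      (matPart s i q 0 0 + matPart s i q 1 1) * QuadraticAlgebra.omega ^ (a : ℕ) +
        matPart s i q 2 2 := by
  have hmat : matRep (toFreeGroup ⟨s, i, q, a⟩) = matPart s i q *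
      diagonal (![QuadraticAlgebra.omega, QuadraticAlgebra.omega, 1] ^ (a : ℕ)) := by
    rw [matRep_toFreeGroup, NormalForm.eval, matU_mul_matV_sq, diagonal_pow, matPart]
    simp only [mul_assoc]
  simp [hmat, Matrix.trace, Fin.sum_univ_three, add_mul]

theorem det_matU : matU.det = ⟨⟨-2, 0⟩, ⟨0, 1⟩⟩ := by decide +kernel

theorem det_matV : matV.det = ⟨⟨0, -1⟩, ⟨2, 0⟩⟩ := by decide +kernel

theorem det_matB : matB.det = ⟨⟨-2, 0⟩, ⟨0, 1⟩⟩ := by decide +kernel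

theorem det_matRep_toFreeGroup (w : CyclicWord) :
    (matRep w.toFreeGroup).det =
      midEval ⟨⟨-2, 0⟩, ⟨0, 1⟩⟩ ⟨⟨-2, 0⟩, ⟨0, 1⟩⟩ w.mid *
        w.right.eval ⟨⟨-2, 0⟩, ⟨0, 1⟩⟩ ⟨⟨0, -1⟩, ⟨2, 0⟩⟩ := by
  simp only [matRep_toFreeGroup, ← coe_detMonoidHom, map_mul, map_midEval, NormalForm.map_eval]
  simp only [coe_detMonoidHom, det_matU, det_matV, det_matB]

/-- Goldman's discriminant of the matrix of the word with the given entries, in a form that is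
cheap to evaluate. -/
def disc (s : Fin 3) (i : Fin 6) (q : Fin 4) (a : Fin 12) : ℤ√3 :=
  CycInt.goldmanDisc
    ((matPart s i q 0 0 + matPart s i q 1 1) * QuadraticAlgebra.omega ^ (a : ℕ) +
      matPart s i q 2 2)
    (midEval ⟨⟨-2, 0⟩, ⟨0, 1⟩⟩ ⟨⟨-2, 0⟩, ⟨0, 1⟩⟩ s *
      NormalForm.eval ⟨⟨-2, 0⟩, ⟨0, 1⟩⟩ ⟨⟨0, -1⟩, ⟨2, 0⟩⟩ ⟨i, q, a⟩)

theorem goldmanDisc_matRep_toFreeGroup (s : Fin 3) (i : Fin 6) (q : Fin 4) (a : Fin 12) :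
    CycInt.goldmanDisc (matRep (toFreeGroup ⟨s, i, q, a⟩)).trace
      (matRep (toFreeGroup ⟨s, i, q, a⟩)).det = disc s i q a := by
  rw [trace_matRep_toFreeGroup, det_matRep_toFreeGroup, disc]

theorem not_isOfFinOrder_val_of_disc {s : Fin 3} {i : Fin 6} {q : Fin 4} {a : Fin 12}
    (him : 0 < (disc s i q a).im) (hre : -3 * (disc s i q a).im ≤ 2 * (disc s i q a).re) :
    ¬IsOfFinOrder (val ⟨s, i, q, a⟩) := by
  intro hfin
  rw [← mk_toFreeGroup] at hfin
  have hdisc := goldmanDisc_matRep_nonpos hfin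
  rw [goldmanDisc_matRep_toFreeGroup] at hdisc
  exact hdisc.not_gt (CycInt.realHom_pos him hre)

theorem equivMem_of_mid_eq_zero : ∀ i q a, EquivMem (⟨0, 1⟩ :: torsionWords) ⟨0, i, q, a⟩ := by
  decide +kernel

theorem disc_pos_or_equivMem_of_mid_eq_one : ∀ i q a,
    0 < (disc 1 i q a).im ∧ -3 * (disc 1 i q a).im ≤ 2 * (disc 1 i q a).re ∨
      EquivMem finiteOrderWords ⟨1, i, q, a⟩ := by
  decide +kernel

theorem disc_pos_or_equivMem_of_mid_eq_two : ∀ i q a,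
    0 < (disc 2 i q a).im ∧ -3 * (disc 2 i q a).im ≤ 2 * (disc 2 i q a).re ∨
      EquivMem finiteOrderWords ⟨2, i, q, a⟩ := by
  decide +kernel

theorem isClassified_val : ∀ w : CyclicWord, IsClassified w.val := by
  have hdisc {s : Fin 3} {i : Fin 6} {q : Fin 4} {a : Fin 12}
      (h : 0 < (disc s i q a).im ∧ -3 * (disc s i q a).im ≤ 2 * (disc s i q a).re ∨
        EquivMem finiteOrderWords ⟨s, i, q, a⟩) : IsClassified (val ⟨s, i, q, a⟩) := by
    obtain ⟨him, hre⟩ | h := h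
    · exact fun _ hfin => absurd hfin (not_isOfFinOrder_val_of_disc him hre)
    · exact h.isClassified isClassified_val_of_mem_finiteOrderWords
  rintro ⟨s, i, q, a⟩
  fin_cases s
  · exact (equivMem_of_mid_eq_zero i q a).isClassified
      (List.forall_mem_cons.2 ⟨isClassified_val_one, isClassified_val_of_mem_torsionWords⟩)
  · exact hdisc (disc_pos_or_equivMem_of_mid_eq_one i q a)
  · exact hdisc (disc_pos_or_equivMem_of_mid_eq_two i q a)

end CyclicWord

end

end CartwrightSteger

/-- every element of `G` of finite order `n > 1` is conjugate in `G`
to one of the listed elements or to the inverse of one of them. -/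
theorem stmt_3 (g : CS) (hg : g ≠ 1) (hfin : IsOfFinOrder g) :
    ∃ t ∈ torsionReps, IsConj t g ∨ IsConj t⁻¹ g := by
  obtain ⟨t, ht⟩ := CartwrightSteger.exists_isConj_coset_word_val hfin
  exact t.cyclic.isClassified_val.isConj (t.isConj_cyclic_val.trans ht) hg hfin
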